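/- Suppose α is Diophantine, x ∈ ℝ, E ∈ ℝ with γ(E) > 0, and ψ: ℤ → ℝ is a polynomially bounded (i.e. |ψ(m)| ≤ C(1 + |m|)^p for some C, p > 0) solution of the equation ψ(m+1) + ψ(m−1) + λ v(x + mα) ψ(m) = E ψ(m) for all m ∈ ℤ. Then ψ ∈ l²(ℤ), i.e. ∑_{m∈ℤ} ψ(m)² < ∞. -/

import Mathlib

/-!
The proof compares the finite-volume Dirichlet determinants of the operator on boxes of size `n`
with the Lyapunov growth, using that the potential is monotone on a period.

Write `P_n(y)` for the determinant of `E - H` on a box of `n` sites with phase `y`; the entries of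
the transfer matrix are such determinants. Cramer's rule (`charP_mul_solution`) gives, for a solution
`ψ` and a box `[a, a + n)` with `n = k + 1 + l`,
`P_n ψ(a + k) = P_l ψ(a - 1) + P_k ψ(a + n)`, so `ψ` is small in the middle of a box as soon as the
ratios of determinants are.

*Uniformity in the phase.* Moving the phase by a small `δ > 0` raises the potential by at least
`λ γ₋ δ`, except at the few sites which cross the discontinuity; the Diophantine condition keeps
these sites far apart (`card_jumpSet_le`). Since finite-rank perturbations change eigenvalue counts
by at most their rank, the counting functions at any two phases differ by `D` with `D log n = o(n)`
(`cnt_discrepancy`), and a window of polynomially small width around `E` contains at most `D`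
eigenvalues (`winCnt_le`). Consequently the truncated log-determinants `logS` are, up to `o(n)`,
independent of the phase and additive under splitting a box (`logS_le_logS`, `logS_split`).
Positivity of the Lyapunov exponent yields one good phase (`exists_logS_ge`), hence a lower bound at
all phases. For a regular box, one with no eigenvalue within a polynomially small `resWidth` of `E`,
truncation costs only `o(n)`, and the ratios above are exponentially small (`regular_decay`).

*Few resonances.* Corrected for crossings, the number of eigenvalues up to the upper edge of the
resonance window is a nonincreasing integer function of the phase which drops by exactly `n` over
one period and by at least one when a resonant phase is left. Hence at most `n` among boxes with
nearby positions are resonant (`card_resonant_le`).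

*Conclusion.* If `ψ(m₀) ≠ 0`, polynomial boundedness forces all boxes with `m₀` in their middle part
to be resonant at large scales `n`. Together with the boxes having a site `m`, `|m - m₀| = n`, in
their middle part there are more than `n` boxes, so one of the latter is regular and `ψ(m)` is
exponentially small (`solution_decay`).
-/

open MeasureTheory Filter

noncomputable section

/-- `‖x‖ = dist(x, ℤ)`, the distance from `x` to the nearest integer. -/
noncomputable def distInt (x : ℝ) : ℝ := |x - round x|

/-- `α` is Diophantine: `‖nα‖ ≥ C n^{-τ}` for all positive integers `n`. -/
def IsDiophantine (α : ℝ) : Prop :=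
  ∃ C τ : ℝ, 0 < C ∧ 0 < τ ∧ ∀ n : ℕ, 0 < n → C * (n : ℝ) ^ (-τ) ≤ distInt ((n : ℝ) * α)

/-- The `n`-step transfer matrix `M_n(x,E) = ∏_{l=n-1}^{0} [[E - λ v(x + lα), -1],[1, 0]]`. -/
noncomputable def transferMat (lam : ℝ) (v : ℝ → ℝ) (α E x : ℝ) :
    ℕ → Matrix (Fin 2) (Fin 2) ℝ
  | 0 => 1
  | n + 1 => !![E - lam * v (x + (n : ℝ) * α), -1; 1, 0] * transferMat lam v α E x n

/-- A norm on 2×2 real matrices (Frobenius/Hilbert-Schmidt norm). -/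
noncomputable def matNorm (M : Matrix (Fin 2) (Fin 2) ℝ) : ℝ :=
  Real.sqrt (∑ i, ∑ j, (M i j) ^ 2)

/-- The Lyapunov exponent `γ(E) = inf_{n ≥ 1} (1/n) ∫₀¹ ln ‖M_n(x,E)‖ dx`. -/
noncomputable def lyap (lam : ℝ) (v : ℝ → ℝ) (α E : ℝ) : ℝ :=
  ⨅ n : ℕ+, (1 / (n : ℝ)) *
    ∫ x in (0:ℝ)..1, Real.log (matNorm (transferMat lam v α E x (n : ℕ)))

/-! ### Counting negative directions of diagonalised quadratic forms -/

/-- Two diagonalised quadratic forms `∑ e i * a i w ^ 2` and `∑ e' j * b j w ^ 2` on `V`, the first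
dominating the second on the common kernel of the functionals `c k`. If the claimed inequality
failed, some `w ≠ 0` would be killed by every `c k`, by the `a i` with `0 ≤ e i` and by the `b j`
with `e' j < 0`, and the two forms would have incompatible signs there. -/
lemma count_neg_le {V I J K : Type*} [AddCommGroup V] [Module ℝ V] [FiniteDimensional ℝ V]
    [Fintype I] [Fintype J] [Fintype K]
    (a : I → V →ₗ[ℝ] ℝ) (b : J → V →ₗ[ℝ] ℝ) (c : K → V →ₗ[ℝ] ℝ) (e : I → ℝ) (e' : J → ℝ)
    (hle : ∀ w, (∀ k, c k w = 0) → ∑ j, e' j * (b j w) ^ 2 ≤ ∑ i, e i * (a i w) ^ 2)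
    (hinj : ∀ w, (∀ k, c k w = 0) → (∀ i, a i w = 0) → w = 0) :
    Module.finrank ℝ V + (Finset.univ.filter fun i => e i < 0).card ≤
      Fintype.card I + (Finset.univ.filter fun j => e' j < 0).card + Fintype.card K := by
  classical
  by_contra hcon
  push Not at hcon
  let f : V →ₗ[ℝ] (({i // ¬ e i < 0} → ℝ) × ({j // e' j < 0} → ℝ)) × (K → ℝ) :=
    ((LinearMap.pi fun i : {i // ¬ e i < 0} => a i.1).prod
      (LinearMap.pi fun j : {j // e' j < 0} => b j.1)).prod (LinearMap.pi c)
  have hI : Fintype.card {i // ¬ e i < 0} = Fintype.card I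
      - (Finset.univ.filter fun i => e i < 0).card := by
    rw [Fintype.card_subtype_compl, Fintype.card_subtype]
  have hI' : (Finset.univ.filter fun i => e i < 0).card ≤ Fintype.card I :=
    Finset.card_le_univ _
  have hker : LinearMap.ker f ≠ ⊥ := by
    apply LinearMap.ker_ne_bot_of_finrank_lt
    simp only [Module.finrank_prod, Module.finrank_fintype_fun_eq_card, hI,
      Fintype.card_subtype]
    omega
  obtain ⟨w, hw, hw0⟩ := (Submodule.ne_bot_iff _).1 hker
  have hw' : f w = 0 := hw
  have ha : ∀ i, ¬ e i < 0 → a i w = 0 := fun i hi =>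
    congrFun (congrArg (fun z => z.1.1) hw') ⟨i, hi⟩
  have hb : ∀ j, e' j < 0 → b j w = 0 := fun j hj =>
    congrFun (congrArg (fun z => z.1.2) hw') ⟨j, hj⟩
  have hc : ∀ k, c k w = 0 := fun k => congrFun (congrArg (fun z => z.2) hw') k
  have h1 : 0 ≤ ∑ j, e' j * (b j w) ^ 2 := by
    refine Finset.sum_nonneg fun j _ => ?_
    by_cases hj : e' j < 0
    · simp [hb j hj]
    · exact mul_nonneg (not_lt.1 hj) (sq_nonneg _)
  have h2 : ∀ i ∈ Finset.univ, e i * (a i w) ^ 2 ≤ 0 := fun i _ => by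
    by_cases hi : e i < 0
    · exact mul_nonpos_of_nonpos_of_nonneg hi.le (sq_nonneg _)
    · simp [ha i hi]
  have h3 : ∑ i, e i * (a i w) ^ 2 = 0 :=
    le_antisymm (Finset.sum_nonpos h2) (h1.trans (hle w hc))
  rw [Finset.sum_eq_zero_iff_of_nonpos h2] at h3
  refine hw0 (hinj w hc fun i => ?_)
  by_cases hi : e i < 0
  · have := h3 i (Finset.mem_univ i)
    simpa [hi.ne] using this
  · exact ha i hi

/-- The version of `count_neg_le` for nonpositive directions, from negating both forms. -/
lemma count_nonpos_le {V I J K : Type*} [AddCommGroup V] [Module ℝ V] [FiniteDimensional ℝ V]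
    [Fintype I] [Fintype J] [Fintype K]
    (a : I → V →ₗ[ℝ] ℝ) (b : J → V →ₗ[ℝ] ℝ) (c : K → V →ₗ[ℝ] ℝ) (e : I → ℝ) (e' : J → ℝ)
    (hle : ∀ w, (∀ k, c k w = 0) → ∑ j, e' j * (b j w) ^ 2 ≤ ∑ i, e i * (a i w) ^ 2)
    (hinj : ∀ w, (∀ k, c k w = 0) → (∀ j, b j w = 0) → w = 0) :
    Module.finrank ℝ V + (Finset.univ.filter fun i => e i ≤ 0).card ≤
      Fintype.card I + (Finset.univ.filter fun j => e' j ≤ 0).card + Fintype.card K := by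
  classical
  have h := count_neg_le b a c (fun j => - e' j) (fun i => - e i)
    (fun w hw => by simpa [Finset.sum_neg_distrib] using hle w hw) hinj
  have hI := Finset.card_filter_add_card_filter_not (s := Finset.univ) (fun i : I => e i ≤ 0)
  have hJ := Finset.card_filter_add_card_filter_not (s := Finset.univ) (fun j : J => e' j ≤ 0)
  simp only [Left.neg_neg_iff, not_le, Finset.card_univ] at h hI hJ
  omega

/-! ### Jacobi matrices and their eigenvalue counting functions -/

/-- Entries of the half-infinite Jacobi matrix with diagonal `u` and off-diagonal entries `1`. -/
def jacEntry (u : ℕ → ℝ) (i j : ℕ) : ℝ :=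
  (if i = j then u i else 0) + (if i + 1 = j then 1 else 0) + (if j + 1 = i then 1 else 0)

/-- The `n × n` truncation of the Jacobi matrix with diagonal `u`: the Schrödinger operator with
potential `u` on `n` consecutive sites, with Dirichlet boundary conditions. -/
def jac (u : ℕ → ℝ) (n : ℕ) : Matrix (Fin n) (Fin n) ℝ :=
  Matrix.of fun i j => jacEntry u i j

lemma jac_herm (u : ℕ → ℝ) (n : ℕ) : (jac u n).IsHermitian := by
  ext i j
  simp only [jac, jacEntry, Matrix.conjTranspose_apply, Matrix.of_apply, star_trivial]
  by_cases h : (i : ℕ) = j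
  · simp [h]
  · simp only [h, Ne.symm h, if_false]; ring

/-- The eigenvalues of `jac u n`, with multiplicity. -/
def eig (u : ℕ → ℝ) (n : ℕ) : Fin n → ℝ := (jac_herm u n).eigenvalues

/-- The coefficient of the restriction of `f` to `{0, …, n - 1}` along the `j`-th vector of an
orthonormal eigenbasis of `jac u n`. -/
def coef (u : ℕ → ℝ) (n : ℕ) (j : Fin n) : (ℕ → ℝ) →ₗ[ℝ] ℝ :=
  ∑ i : Fin n, ((jac_herm u n).eigenvectorBasis j).ofLp i • LinearMap.proj (i : ℕ)

lemma coef_eq_inner (u : ℕ → ℝ) (n : ℕ) (j : Fin n) (f : ℕ → ℝ) :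
    coef u n j f = inner ℝ ((jac_herm u n).eigenvectorBasis j)
      (WithLp.toLp 2 fun i : Fin n => f i) := by
  simp only [coef, LinearMap.sum_apply, LinearMap.smul_apply, LinearMap.proj_apply, smul_eq_mul,
    PiLp.inner_apply, RCLike.inner_apply, conj_trivial]
  exact Finset.sum_congr rfl fun i _ => mul_comm _ _

lemma sum_coef_sq (u : ℕ → ℝ) (n : ℕ) (f : ℕ → ℝ) :
    ∑ j, (coef u n j f) ^ 2 = ∑ i ∈ Finset.range n, f i ^ 2 := by
  have h := (jac_herm u n).eigenvectorBasis.sum_sq_norm_inner_right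
    (WithLp.toLp 2 fun i : Fin n => f i)
  rw [EuclideanSpace.norm_sq_eq] at h
  simp only [Real.norm_eq_abs, sq_abs] at h
  simp only [coef_eq_inner, h]
  exact Fin.sum_univ_eq_sum_range (fun i => f i ^ 2) n

lemma sum_eig_coef_sq (u : ℕ → ℝ) (n : ℕ) (f : ℕ → ℝ) (hf : f n = 0) :
    ∑ j, eig u n j * (coef u n j f) ^ 2 =
      ∑ i ∈ Finset.range n, (u i * f i ^ 2 + 2 * (f i * f (i + 1))) := by
  set b := (jac_herm u n).eigenvectorBasis with hb
  set g : EuclideanSpace ℝ (Fin n) := WithLp.toLp 2 fun i : Fin n => f i with hg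
  -- the coefficients of `(jac u n) g` are the eigenvalues times those of `g`
  have h1 : ∀ j, eig u n j * coef u n j f =
      inner ℝ (b j) (WithLp.toLp 2 ((jac u n).mulVec g.ofLp)) := by
    intro j
    have h2 := (jac_herm u n).mulVec_eigenvectorBasis j
    rw [coef_eq_inner, ← hb, ← hg]
    rw [← hb] at h2
    rw [EuclideanSpace.inner_eq_star_dotProduct, EuclideanSpace.inner_eq_star_dotProduct]
    simp only [star_trivial]
    have h3 : (jac u n).mulVec g.ofLp ⬝ᵥ (b j).ofLp = g.ofLp ⬝ᵥ (jac u n).mulVec (b j).ofLp := by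
      rw [Matrix.dotProduct_mulVec, ← Matrix.mulVec_transpose]
      congr 2
      have := jac_herm u n
      rw [Matrix.IsHermitian, Matrix.conjTranspose_eq_transpose_of_trivial] at this
      exact this.symm
    rw [h3, h2, dotProduct_smul, smul_eq_mul]
    rfl
  have h4 : ∑ j, eig u n j * (coef u n j f) ^ 2 =
      inner ℝ g (WithLp.toLp 2 ((jac u n).mulVec g.ofLp)) := by
    rw [← b.sum_inner_mul_inner]
    refine Finset.sum_congr rfl fun j _ => ?_
    rw [← h1, coef_eq_inner, real_inner_comm g (b j)]
    ring
  rw [h4, EuclideanSpace.inner_eq_star_dotProduct]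
  simp only [star_trivial, dotProduct, Matrix.mulVec, jac, Matrix.of_apply, hg]
  have h5 : ∀ i : Fin n, (∑ j : Fin n, jacEntry u i j * f j) * f i =
      (fun i : ℕ => (∑ j ∈ Finset.range n, jacEntry u i j * f j) * f i) i := fun i => by
    simp only
    rw [← Fin.sum_univ_eq_sum_range (fun j => jacEntry u i j * f j)]
  rw [Finset.sum_congr rfl fun i _ => h5 i, Fin.sum_univ_eq_sum_range
    (fun i : ℕ => (∑ j ∈ Finset.range n, jacEntry u i j * f j) * f i)]
  have h6 : ∀ i ∈ Finset.range n, (∑ j ∈ Finset.range n, jacEntry u i j * f j) * f i =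
      u i * f i ^ 2 + f i * f (i + 1) +
        ∑ j ∈ Finset.range n, (if j + 1 = i then 1 else 0) * f j * f i := by
    intro i hi
    have hi' := Finset.mem_range.1 hi
    simp only [jacEntry, add_mul, Finset.sum_add_distrib, ite_mul, zero_mul, one_mul,
      Finset.sum_ite_eq, Finset.sum_mul, hi, if_true]
    by_cases h : i + 1 ∈ Finset.range n
    · simp only [h, if_true]; ring
    · have : i + 1 = n := by rw [Finset.mem_range] at h; omega
      rw [if_neg h, this, hf]; ring
  rw [Finset.sum_congr rfl h6, Finset.sum_add_distrib]
  have h7 : ∑ i ∈ Finset.range n, ∑ j ∈ Finset.range n, (if j + 1 = i then 1 else 0) * f j * f i =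
      ∑ i ∈ Finset.range n, f i * f (i + 1) := by
    rw [Finset.sum_comm]
    refine Finset.sum_congr rfl fun j hj => ?_
    have hj' := Finset.mem_range.1 hj
    simp only [ite_mul, zero_mul, one_mul, Finset.sum_ite_eq]
    by_cases h : j + 1 ∈ Finset.range n
    · simp only [h, if_true]
    · have : j + 1 = n := by rw [Finset.mem_range] at h; omega
      rw [if_neg h, this, hf, mul_zero]
  rw [h7, ← Finset.sum_add_distrib]
  exact Finset.sum_congr rfl fun i _ => by ring

/-- Number of eigenvalues of `jac u n` strictly below `t`. -/
def cntLt (u : ℕ → ℝ) (n : ℕ) (t : ℝ) : ℕ := (Finset.univ.filter fun j => eig u n j < t).card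

/-- Number of eigenvalues of `jac u n` that are at most `t`. -/
def cntLe (u : ℕ → ℝ) (n : ℕ) (t : ℝ) : ℕ := (Finset.univ.filter fun j => eig u n j ≤ t).card

/-- Extension of a vector on `n` sites by zero. -/
def extZ (n : ℕ) : (Fin n → ℝ) →ₗ[ℝ] (ℕ → ℝ) :=
  LinearMap.pi fun i => if h : i < n then LinearMap.proj ⟨i, h⟩ else 0

lemma extZ_ge (n : ℕ) (w : Fin n → ℝ) (i : ℕ) (h : n ≤ i) : extZ n w i = 0 := by
  simp [extZ, not_lt.2 h]

lemma extZ_lt (n : ℕ) (w : Fin n → ℝ) (i : Fin n) : extZ n w i = w i := by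
  simp [extZ]

lemma sum_eig_sub_coef_sq (u : ℕ → ℝ) (n : ℕ) (f : ℕ → ℝ) (hf : f n = 0) (t : ℝ) :
    ∑ j, (eig u n j - t) * (coef u n j f) ^ 2 =
      ∑ i ∈ Finset.range n, ((u i - t) * f i ^ 2 + 2 * (f i * f (i + 1))) := by
  have h1 := sum_eig_coef_sq u n f hf
  have h2 := sum_coef_sq u n f
  simp only [sub_mul, Finset.sum_sub_distrib, ← Finset.mul_sum, h1, h2, Finset.sum_add_distrib]
  ring

lemma extZ_eq_zero_of_coef (u : ℕ → ℝ) (n : ℕ) (f : ℕ → ℝ) (h : ∀ j, coef u n j f = 0)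
    (i : ℕ) (hi : i < n) : f i = 0 := by
  have h2 := sum_coef_sq u n f
  simp only [h] at h2
  have h3 : ∑ i ∈ Finset.range n, f i ^ 2 = 0 := by rw [← h2]; simp
  rw [Finset.sum_eq_zero_iff_of_nonneg fun _ _ => sq_nonneg _] at h3
  simpa using h3 i (Finset.mem_range.2 hi)

lemma mono_form (u u' : ℕ → ℝ) (n : ℕ) (t t' : ℝ) (B : Finset (Fin n))
    (h : ∀ i : Fin n, i ∉ B → u' i - t' ≤ u i - t) (w : Fin n → ℝ)
    (hw : ∀ k : B, w k = 0) :
    ∑ j, (eig u' n j - t') * (coef u' n j (extZ n w)) ^ 2 ≤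
      ∑ j, (eig u n j - t) * (coef u n j (extZ n w)) ^ 2 := by
  rw [sum_eig_sub_coef_sq _ _ _ (extZ_ge n w n le_rfl),
    sum_eig_sub_coef_sq _ _ _ (extZ_ge n w n le_rfl)]
  refine Finset.sum_le_sum fun i hi => ?_
  have hi := Finset.mem_range.1 hi
  have he := extZ_lt n w ⟨i, hi⟩
  simp only at he
  by_cases hB : (⟨i, hi⟩ : Fin n) ∈ B
  · have := hw ⟨_, hB⟩
    simp only at this
    rw [he, this]; simp
  · have := h ⟨i, hi⟩ hB
    simp only at this
    have := mul_le_mul_of_nonneg_right this (sq_nonneg (extZ n w i))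
    linarith

/-- Raising the diagonal by `t - t'` outside `B` (it may be arbitrary on `B`) increases the number
of eigenvalues below the correspondingly raised threshold by at most `#B`. -/
lemma cntLt_mono (u u' : ℕ → ℝ) (n : ℕ) (t t' : ℝ) (B : Finset (Fin n))
    (h : ∀ i : Fin n, i ∉ B → u' i - t' ≤ u i - t) :
    cntLt u n t ≤ cntLt u' n t' + B.card := by
  have := count_neg_le (fun j => coef u n j ∘ₗ extZ n) (fun j => coef u' n j ∘ₗ extZ n)
    (fun k : B => LinearMap.proj k.1) (fun j => eig u n j - t) (fun j => eig u' n j - t')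
    (fun w hw => mono_form u u' n t t' B h w hw)
    (fun w hw hj => by
      ext i
      rw [← extZ_lt _ w i]
      exact extZ_eq_zero_of_coef u n _ hj i i.2)
  simp only [sub_neg, Module.finrank_fintype_fun_eq_card, Fintype.card_coe] at this
  unfold cntLt
  omega

lemma cntLe_mono (u u' : ℕ → ℝ) (n : ℕ) (t t' : ℝ) (B : Finset (Fin n))
    (h : ∀ i : Fin n, i ∉ B → u' i - t' ≤ u i - t) :
    cntLe u n t ≤ cntLe u' n t' + B.card := by
  have := count_nonpos_le (fun j => coef u n j ∘ₗ extZ n) (fun j => coef u' n j ∘ₗ extZ n)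
    (fun k : B => LinearMap.proj k.1) (fun j => eig u n j - t) (fun j => eig u' n j - t')
    (fun w hw => mono_form u u' n t t' B h w hw)
    (fun w hw hj => by
      ext i
      rw [← extZ_lt _ w i]
      exact extZ_eq_zero_of_coef u' n _ hj i i.2)
  simp only [sub_nonpos, Module.finrank_fintype_fun_eq_card, Fintype.card_coe] at this
  unfold cntLe
  omega

/-- Translation of sequences by `m`. -/
def shiftL (m : ℕ) : (ℕ → ℝ) →ₗ[ℝ] (ℕ → ℝ) := LinearMap.pi fun i => LinearMap.proj (m + i)

/-- The site `k` among `k + 1 + l` sites. -/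
def midSite (k l : ℕ) : Fin (k + 1 + l) := ⟨k, by omega⟩

/-- Eigencoefficients of the direct sum of the blocks `{0, …, k - 1}` and
`{k + 1, …, k + l}`. -/
def splitCoef (u : ℕ → ℝ) (k l : ℕ) : Fin k ⊕ Fin l → (Fin (k + 1 + l) → ℝ) →ₗ[ℝ] ℝ :=
  Sum.elim (fun j => coef u k j ∘ₗ extZ (k + 1 + l))
    (fun j => coef (fun i => u (k + 1 + i)) l j ∘ₗ shiftL (k + 1) ∘ₗ extZ (k + 1 + l))

/-- Eigenvalues of the direct sum of the two blocks left after deleting the site `k`. -/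
def splitEig (u : ℕ → ℝ) (k l : ℕ) : Fin k ⊕ Fin l → ℝ :=
  Sum.elim (eig u k) (eig (fun i => u (k + 1 + i)) l)

lemma split_form (u : ℕ → ℝ) (k l : ℕ) (t : ℝ) (w : Fin (k + 1 + l) → ℝ)
    (hw : w (midSite k l) = 0) :
    ∑ j, (splitEig u k l j - t) * (splitCoef u k l j w) ^ 2 =
      ∑ j, (eig u (k + 1 + l) j - t) * (coef u (k + 1 + l) j (extZ _ w)) ^ 2 := by
  rw [sum_eig_sub_coef_sq _ _ _ (extZ_ge _ w _ le_rfl), Fintype.sum_sum_type]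
  have hk : extZ (k + 1 + l) w k = 0 := by
    have := extZ_lt _ w (midSite k l)
    simp only [midSite] at this hw
    rw [this, hw]
  simp only [splitEig, splitCoef, Sum.elim_inl, Sum.elim_inr, LinearMap.comp_apply]
  rw [sum_eig_sub_coef_sq _ _ _ hk, sum_eig_sub_coef_sq _ _ _ (by
    simpa [shiftL] using extZ_ge _ w (k + 1 + l) le_rfl)]
  rw [Finset.sum_range_add, Finset.sum_range_succ, hk]
  simp [shiftL, add_assoc]

lemma split_inj (u : ℕ → ℝ) (k l : ℕ) (w : Fin (k + 1 + l) → ℝ)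
    (hw : w (midSite k l) = 0) (h : ∀ j, splitCoef u k l j w = 0) : w = 0 := by
  ext i
  rcases lt_trichotomy i.1 k with hi | hi | hi
  · rw [← extZ_lt _ w i]
    exact extZ_eq_zero_of_coef u k _ (fun j => h (Sum.inl j)) i hi
  · have : i = (midSite k l) := Fin.ext hi
    rw [this, hw]; rfl
  · have := extZ_eq_zero_of_coef (fun i => u (k + 1 + i)) l _ (fun j => h (Sum.inr j))
      (i - (k + 1)) (by omega)
    simp only [shiftL, LinearMap.comp_apply, LinearMap.pi_apply, LinearMap.proj_apply] at this
    rw [Nat.add_sub_cancel' hi, extZ_lt] at this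
    exact this

lemma card_split (p : ℝ → Prop) [DecidablePred p] (u : ℕ → ℝ) (k l : ℕ) :
    (Finset.univ.filter fun j => p (splitEig u k l j)).card =
      (Finset.univ.filter fun j => p (eig u k j)).card +
      (Finset.univ.filter fun j => p (eig (fun i => u (k + 1 + i)) l j)).card := by
  rw [Finset.card_filter, Finset.card_filter, Finset.card_filter, Fintype.sum_sum_type]
  rfl

/-- Cauchy interlacing for the deletion of one site. -/
lemma cntLt_split_ge (u : ℕ → ℝ) (k l : ℕ) (t : ℝ) :
    cntLt u k t + cntLt (fun i => u (k + 1 + i)) l t ≤ cntLt u (k + 1 + l) t := by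
  have := count_neg_le (splitCoef u k l) (fun j => coef u (k + 1 + l) j ∘ₗ extZ _)
    (fun _ : Unit => LinearMap.proj (midSite k l)) (fun j => splitEig u k l j - t)
    (fun j => eig u (k + 1 + l) j - t)
    (fun w hw => (split_form u k l t w (hw ())).symm.le)
    (fun w hw hj => split_inj u k l w (hw ()) hj)
  simp only [sub_neg, Module.finrank_fintype_fun_eq_card, Fintype.card_unit,
    Fintype.card_sum, Fintype.card_fin, card_split (· < t)] at this
  unfold cntLt
  omega

lemma cntLe_split_ge (u : ℕ → ℝ) (k l : ℕ) (t : ℝ) :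
    cntLe u k t + cntLe (fun i => u (k + 1 + i)) l t ≤ cntLe u (k + 1 + l) t := by
  have := count_nonpos_le (splitCoef u k l) (fun j => coef u (k + 1 + l) j ∘ₗ extZ _)
    (fun _ : Unit => LinearMap.proj (midSite k l)) (fun j => splitEig u k l j - t)
    (fun j => eig u (k + 1 + l) j - t)
    (fun w hw => (split_form u k l t w (hw ())).symm.le)
    (fun w hw hj => by
      ext i
      rw [← extZ_lt _ w i]
      exact extZ_eq_zero_of_coef u _ _ hj i i.2)
  simp only [sub_nonpos, Module.finrank_fintype_fun_eq_card, Fintype.card_unit,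
    Fintype.card_sum, Fintype.card_fin, card_split (· ≤ t)] at this
  unfold cntLe
  omega

lemma cntLt_split_le (u : ℕ → ℝ) (k l : ℕ) (t : ℝ) :
    cntLt u (k + 1 + l) t ≤ cntLt u k t + cntLt (fun i => u (k + 1 + i)) l t + 1 := by
  have := count_neg_le (fun j => coef u (k + 1 + l) j ∘ₗ extZ _) (splitCoef u k l)
    (fun _ : Unit => LinearMap.proj (midSite k l))
    (fun j => eig u (k + 1 + l) j - t) (fun j => splitEig u k l j - t)
    (fun w hw => (split_form u k l t w (hw ())).le)
    (fun w hw hj => by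
      ext i
      rw [← extZ_lt _ w i]
      exact extZ_eq_zero_of_coef u _ _ hj i i.2)
  simp only [sub_neg, Module.finrank_fintype_fun_eq_card, Fintype.card_unit,
    Fintype.card_fin, card_split (· < t)] at this
  unfold cntLt
  omega

lemma cntLe_split_le (u : ℕ → ℝ) (k l : ℕ) (t : ℝ) :
    cntLe u (k + 1 + l) t ≤ cntLe u k t + cntLe (fun i => u (k + 1 + i)) l t + 1 := by
  have := count_nonpos_le (fun j => coef u (k + 1 + l) j ∘ₗ extZ _) (splitCoef u k l)
    (fun _ : Unit => LinearMap.proj (midSite k l))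
    (fun j => eig u (k + 1 + l) j - t) (fun j => splitEig u k l j - t)
    (fun w hw => (split_form u k l t w (hw ())).le)
    (fun w hw hj => split_inj u k l w (hw ()) hj)
  simp only [sub_nonpos, Module.finrank_fintype_fun_eq_card, Fintype.card_unit,
    Fintype.card_fin, card_split (· ≤ t)] at this
  unfold cntLe
  omega

lemma abs_eig_le (u : ℕ → ℝ) (n : ℕ) (U : ℝ) (hU : ∀ i, |u i| ≤ U) (j : Fin n) :
    |eig u n j| ≤ U + 2 := by
  set b := (jac_herm u n).eigenvectorBasis with hb
  set f : ℕ → ℝ := extZ n (b j).ofLp with hf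
  have hfn : f n = 0 := extZ_ge _ _ _ le_rfl
  have hc : ∀ i, coef u n i f = if i = j then 1 else 0 := by
    intro i
    rw [coef_eq_inner, ← hb]
    have : (WithLp.toLp 2 fun i : Fin n => f i) = b j := by
      ext i
      simp only [hf, extZ_lt]
    rw [this, orthonormal_iff_ite.1 b.orthonormal]
  have h1 := sum_coef_sq u n f
  have h2 := sum_eig_coef_sq u n f hfn
  simp only [hc, ite_pow, one_pow, ne_eq, OfNat.ofNat_ne_zero, not_false_eq_true, zero_pow,
    Finset.sum_ite_eq', Finset.mem_univ, if_true, mul_ite, mul_one, mul_zero] at h1 h2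
  have h3 : ∑ i ∈ Finset.range n, f (i + 1) ^ 2 ≤ 1 := by
    have := Finset.sum_range_succ' (fun i => f i ^ 2) n
    rw [Finset.sum_range_succ, ← h1, hfn] at this
    nlinarith [sq_nonneg (f 0)]
  rw [h2]
  calc _ ≤ ∑ i ∈ Finset.range n, |u i * f i ^ 2 + 2 * (f i * f (i + 1))| :=
        Finset.abs_sum_le_sum_abs _ _
    _ ≤ ∑ i ∈ Finset.range n, ((U + 1) * f i ^ 2 + f (i + 1) ^ 2) := by
        refine Finset.sum_le_sum fun i _ => ?_
        have hu := abs_le.1 (hU i)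
        rw [abs_le]
        constructor
        · nlinarith [sq_nonneg (f i + f (i + 1)), mul_le_mul_of_nonneg_right hu.1 (sq_nonneg (f i))]
        · nlinarith [sq_nonneg (f i - f (i + 1)), mul_le_mul_of_nonneg_right hu.2 (sq_nonneg (f i))]
    _ ≤ U + 2 := by
        rw [Finset.sum_add_distrib, ← Finset.mul_sum, ← h1]
        linarith

/-! ### Characteristic polynomials and the representation of solutions -/

/-- `charP E u n = det (E - jac u n)`, defined by expansion along the first site. -/
def charP (E : ℝ) : (ℕ → ℝ) → ℕ → ℝ
  | _, 0 => 1
  | u, 1 => E - u 0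
  | u, n + 2 => (E - u 0) * charP E (fun i => u (i + 1)) (n + 1) - charP E (fun i => u (i + 2)) n

lemma charP_succ_succ (E : ℝ) (u : ℕ → ℝ) (n : ℕ) : charP E u (n + 2) =
    (E - u 0) * charP E (fun i => u (i + 1)) (n + 1) - charP E (fun i => u (i + 2)) n := by
  rw [charP]

lemma jacEntry_succ (u : ℕ → ℝ) (i j : ℕ) :
    jacEntry u (i + 1) (j + 1) = jacEntry (fun i => u (i + 1)) i j := by
  simp [jacEntry]

lemma det_eq_charP (E : ℝ) : ∀ (n : ℕ) (u : ℕ → ℝ),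
    (Matrix.scalar (Fin n) E - jac u n).det = charP E u n
  | 0, u => by simp [charP]
  | 1, u => by simp [charP, jac, jacEntry]
  | n + 2, u => by
    rw [charP_succ_succ, ← det_eq_charP E (n + 1), ← det_eq_charP E n]
    have hent : ∀ (m : ℕ) (w : ℕ → ℝ) (i j : Fin m), (Matrix.scalar (Fin m) E - jac w m) i j =
        (if i = j then E else 0) - jacEntry w i j := by
      intro m w i j
      simp [jac, Matrix.diagonal_apply]
    set A := Matrix.scalar (Fin (n + 2)) E - jac u (n + 2) with hA
    rw [Matrix.det_succ_column_zero, Fin.sum_univ_succ, Fin.sum_univ_succ]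
    have hz : ∀ i : Fin n, A i.succ.succ 0 = 0 := by
      intro i
      rw [hA, hent]
      simp [jacEntry]
    simp only [hz, mul_zero, zero_mul, Finset.sum_const_zero, add_zero]
    have h00 : A 0 0 = E - u 0 := by rw [hA, hent]; simp [jacEntry]
    have h10 : A (Fin.succ 0) 0 = -1 := by rw [hA, hent]; simp [jacEntry]
    have hs : A.submatrix (Fin.succAbove 0) Fin.succ =
        Matrix.scalar (Fin (n + 1)) E - jac (fun i => u (i + 1)) (n + 1) := by
      ext i j
      rw [Matrix.submatrix_apply, Fin.succAbove_zero, hA, hent, hent]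
      simp [jacEntry_succ]
    have hs1 : (A.submatrix (Fin.succAbove (Fin.succ 0)) Fin.succ).det =
        -(Matrix.scalar (Fin n) E - jac (fun i => u (i + 2)) n).det := by
      rw [Matrix.det_succ_row_zero, Fin.sum_univ_succ]
      have hz2 : ∀ j : Fin n,
          (A.submatrix (Fin.succAbove (Fin.succ 0)) Fin.succ) 0 j.succ = 0 := by
        intro j
        rw [Matrix.submatrix_apply, hA, hent, Fin.succ_succAbove_zero]
        simp [jacEntry, (Fin.succ_ne_zero _).symm]
      have h01 : (A.submatrix (Fin.succAbove (Fin.succ 0)) Fin.succ) 0 0 = -1 := by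
        rw [Matrix.submatrix_apply, hA, hent, Fin.succ_succAbove_zero]
        simp [jacEntry]
      have hsub : (A.submatrix (Fin.succAbove (Fin.succ 0)) Fin.succ).submatrix Fin.succ
          (Fin.succAbove 0) = Matrix.scalar (Fin n) E - jac (fun i => u (i + 2)) n := by
        ext i j
        rw [Matrix.submatrix_apply, Matrix.submatrix_apply, Fin.succ_succAbove_succ,
          Fin.succAbove_zero, hA, hent, hent]
        simp [jacEntry_succ]
      simp only [hz2, mul_zero, zero_mul, Finset.sum_const_zero, add_zero, h01, hsub]
      simp
    rw [h00, h10, hs, hs1]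
    simp
    ring

lemma charP_eq_prod (E : ℝ) (u : ℕ → ℝ) (n : ℕ) : charP E u n = ∏ j, (E - eig u n j) := by
  rw [← det_eq_charP, ← Matrix.eval_charpoly, (jac_herm u n).charpoly_eq, Polynomial.eval_prod]
  simp [eig]

/-- Expansion of `charP` along the last site. -/
lemma charP_right (E : ℝ) : ∀ (n : ℕ) (u : ℕ → ℝ), charP E u (n + 2) =
    (E - u (n + 1)) * charP E u (n + 1) - charP E u n
  | 0, u => by simp [charP]; ring
  | 1, u => by simp [charP]; ring
  | n + 2, u => by
    have h1 := charP_right E (n + 1) fun i => u (i + 1)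
    have h2 := charP_right E n fun i => u (i + 2)
    have h3 := charP_succ_succ E u (n + 2)
    have h4 := charP_succ_succ E u (n + 1)
    have h5 := charP_succ_succ E u n
    linear_combination h3 + (E - u 0) * h1 - h2 - (E - u (n + 3)) * h4 + h5

/-- The value of a solution inside a box from its two boundary values (Green's formula multiplied
by the determinant). The solution is indexed so that `f 0` and `f (k + l + 2)` are the boundary
values of the box carrying the potential values `u 0, …, u (k + l)`. -/
lemma charP_mul_solution (E : ℝ) (u f : ℕ → ℝ)
    (hf : ∀ i, f (i + 2) = (E - u i) * f (i + 1) - f i) : ∀ k l : ℕ,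
    charP E u (k + 1 + l) * f (k + 1) =
      charP E (fun i => u (k + 1 + i)) l * f 0 + charP E u k * f (k + l + 2) := by
  have h0 : ∀ l, charP E u (l + 1) * f 1 =
      charP E (fun i => u (1 + i)) l * f 0 + f (l + 2) := by
    intro l
    induction l using Nat.twoStepInduction with
    | zero => simp [charP, hf 0]
    | one =>
      have h2 := hf 0; have h3 := hf 1
      norm_num at h2 h3 ⊢
      rw [h3, h2]; simp [charP]; ring
    | more l h1 h2 =>
      have h3 := charP_right E (l + 1) u
      have h4 := charP_right E l fun i => u (1 + i)
      have h5 := hf (l + 2)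
      rw [show 1 + (l + 1) = l + 2 by omega] at h4
      linear_combination f 1 * h3 - f 0 * h4 - h5 + (E - u (l + 2)) * h2 - h1
  intro k
  induction k using Nat.twoStepInduction with
  | zero =>
    intro l
    have := h0 l
    simp only [charP, zero_add, one_mul]
    rw [add_comm 1 l]
    exact this
  | one =>
    intro l
    have h := h0 (l + 1)
    have h3 := hf 0
    have h4 := charP_succ_succ E u l
    have c1 : (fun i => u (1 + i)) = fun i => u (i + 1) := by simp only [add_comm]
    have c2 : (fun i => u (1 + 1 + i)) = fun i => u (i + 2) := by
      funext i; rw [add_comm]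
    rw [show 1 + 1 + l = l + 2 by omega, show 1 + l + 2 = l + 1 + 2 by omega, c2]
    rw [c1] at h
    rw [show charP E u 1 = E - u 0 from rfl]
    linear_combination (E - u 0) * h - f 0 * h4 + charP E u (l + 2) * h3
  | more k h1 h2 =>
    intro l
    have h1 := h1 (l + 2)
    have h2 := h2 (l + 1)
    have h3 := charP_succ_succ E (fun i => u (k + 1 + i)) l
    have h4 := charP_right E k u
    have h5 := hf (k + 1)
    have c1 : (fun i => u (k + 1 + (i + 1))) = fun i => u (k + 1 + 1 + i) := by
      funext i; congr 1; omega
    have c2 : (fun i => u (k + 1 + (i + 2))) = fun i => u (k + 2 + 1 + i) := by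
      funext i; congr 1; omega
    simp only [c1, c2, add_zero] at h3
    rw [show k + 1 + (l + 2) = k + 2 + 1 + l by omega,
      show k + (l + 2) + 2 = k + 2 + l + 2 by omega] at h1
    rw [show k + 1 + 1 + (l + 1) = k + 2 + 1 + l by omega,
      show k + 1 + (l + 1) + 2 = k + 2 + l + 2 by omega] at h2
    linear_combination (E - u (k + 1)) * h2 - h1 - f 0 * h3 - f (k + 2 + l + 2) * h4
      + charP E u (k + 2 + 1 + l) * h5

lemma transferMat_eq (lam : ℝ) (v : ℝ → ℝ) (α E x : ℝ) (n : ℕ) :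
    transferMat lam v α E x (n + 2) =
      !![charP E (fun i => lam * v (x + i * α)) (n + 2),
          -charP E (fun i => lam * v (x + (i + 1 : ℕ) * α)) (n + 1);
        charP E (fun i => lam * v (x + i * α)) (n + 1),
          -charP E (fun i => lam * v (x + (i + 1 : ℕ) * α)) n] := by
  induction n with
  | zero =>
    simp [transferMat, charP]
    ring
  | succ n ih =>
    rw [transferMat, ih, charP_right E (n + 1), charP_right E n (fun i => lam * v (x + (i + 1 : ℕ) * α))]
    ext i j
    fin_cases i <;> fin_cases j <;> simp [Matrix.mul_apply] <;> ring_nf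

/-! ### Truncated logarithmic sums -/

lemma integral_inv_indicator (s R c : ℝ) (hs : 0 < s) (hsR : s ≤ R) (hc : c ≤ R) :
    IntervalIntegrable (fun r => if c < r then r⁻¹ else 0) volume s R ∧
    ∫ r in s..R, (if c < r then r⁻¹ else 0) = Real.log R - Real.log (max c s) := by
  set m := max c s with hm
  have hsm : s ≤ m := le_max_right _ _
  have hmR : m ≤ R := max_le hc hsR
  have hm0 : 0 < m := hs.trans_le hsm
  have h1 : Set.EqOn (fun _ : ℝ => (0 : ℝ)) (fun r => if c < r then r⁻¹ else 0) (Set.uIoc s m) := by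
    intro r hr
    rw [Set.uIoc_of_le hsm] at hr
    have : ¬ c < r := by
      rcases le_total c s with h | h
      · rw [hm, max_eq_right h] at hr
        exact absurd hr.2 (not_le.2 hr.1)
      · rw [hm, max_eq_left h] at hr
        exact not_lt.2 hr.2
    simp [this]
  have h2 : Set.EqOn (fun r : ℝ => r⁻¹) (fun r => if c < r then r⁻¹ else 0) (Set.uIoc m R) := by
    intro r hr
    rw [Set.uIoc_of_le hmR] at hr
    have : c < r := (le_max_left c s).trans_lt hr.1
    simp [this]
  have i0 : IntervalIntegrable (fun r : ℝ => r⁻¹) volume m R := by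
    apply ContinuousOn.intervalIntegrable
    intro r hr
    rw [Set.uIcc_of_le hmR] at hr
    exact (continuousAt_inv₀ (hm0.trans_le hr.1).ne').continuousWithinAt
  have i1 : IntervalIntegrable (fun r => if c < r then r⁻¹ else 0) volume s m :=
    (intervalIntegrable_const (c := (0 : ℝ))).congr h1
  have i2 : IntervalIntegrable (fun r => if c < r then r⁻¹ else 0) volume m R := i0.congr h2
  refine ⟨i1.trans i2, ?_⟩
  rw [← intervalIntegral.integral_add_adjacent_intervals i1 i2,
    ← intervalIntegral.integral_congr_ae (ae_of_all _ fun r hr => h1 hr),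
    ← intervalIntegral.integral_congr_ae (ae_of_all _ fun r hr => h2 hr),
    integral_inv_of_pos hm0 (hm0.trans_le hmR), Real.log_div (hm0.trans_le hmR).ne' hm0.ne']
  simp

lemma sum_log_max_eq {I : Type*} [Fintype I] (c : I → ℝ) (s R : ℝ) (hs : 0 < s) (hsR : s ≤ R)
    (hc : ∀ i, c i ≤ R) :
    IntervalIntegrable (fun r => ((Finset.univ.filter fun i => c i < r).card : ℝ) * r⁻¹)
      volume s R ∧
    ∑ i, Real.log (max (c i) s) = (Fintype.card I : ℝ) * Real.log R -
      ∫ r in s..R, ((Finset.univ.filter fun i => c i < r).card : ℝ) * r⁻¹ := by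
  have hfun : (fun r : ℝ => ((Finset.univ.filter fun i => c i < r).card : ℝ) * r⁻¹) =
      fun r => ∑ i, (if c i < r then r⁻¹ else 0) := by
    funext r
    rw [Finset.card_filter]
    push_cast
    rw [Finset.sum_mul]
    exact Finset.sum_congr rfl fun i _ => by split_ifs <;> simp
  have hIntg := fun i => integral_inv_indicator s R (c i) hs hsR (hc i)
  rw [hfun]
  constructor
  · have := IntervalIntegrable.sum (μ := volume) (a := s) (b := R) Finset.univ
      (f := fun i r => if c i < r then r⁻¹ else 0) fun i _ => (hIntg i).1
    rwa [show (∑ i, fun r => if c i < r then r⁻¹ else 0) =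
      fun r : ℝ => ∑ i, (if c i < r then r⁻¹ else 0) by funext r; simp] at this
  · rw [intervalIntegral.integral_finsetSum fun i _ => (hIntg i).1]
    simp only [fun i => (hIntg i).2, Finset.sum_sub_distrib, Finset.sum_const, Finset.card_univ,
      nsmul_eq_mul]
    ring

/-- Layer-cake comparison: `log (max c s) = log R - ∫ r in s..R, 1_{c < r} / r` for `c ≤ R`, so
the truncated logarithmic sums are controlled by the counts of the points in `[0, r)`. -/
lemma sum_log_max_le {I J : Type*} [Fintype I] [Fintype J] (c : I → ℝ) (d : J → ℝ)
    (s R K : ℝ) (hs : 0 < s) (hsR : s ≤ R) (hc : ∀ i, c i ≤ R) (hd : ∀ j, d j ≤ R)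
    (hcount : ∀ r, 0 < r → ((Finset.univ.filter fun j => d j < r).card : ℝ) ≤
      (Finset.univ.filter fun i => c i < r).card + K) :
    ∑ i, Real.log (max (c i) s) ≤ ∑ j, Real.log (max (d j) s)
      + ((Fintype.card I : ℝ) - Fintype.card J) * Real.log R + K * (Real.log R - Real.log s) := by
  have hR : 0 < R := hs.trans_le hsR
  obtain ⟨ic, ec⟩ := sum_log_max_eq c s R hs hsR hc
  obtain ⟨id, ed⟩ := sum_log_max_eq d s R hs hsR hd
  have iK : IntervalIntegrable (fun r : ℝ => K * r⁻¹) volume s R := by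
    apply ContinuousOn.intervalIntegrable
    intro r hr
    rw [Set.uIcc_of_le hsR] at hr
    exact (continuousAt_const.mul (continuousAt_inv₀ (hs.trans_le hr.1).ne')).continuousWithinAt
  have hmono := intervalIntegral.integral_mono_on hsR id (ic.add iK) (fun r hr => by
    have hr0 : 0 < r := hs.trans_le hr.1
    have := mul_le_mul_of_nonneg_right (hcount r hr0) (inv_pos.2 hr0).le
    simpa [add_mul] using this)
  rw [intervalIntegral.integral_add ic iK, intervalIntegral.integral_const_mul,
    integral_inv_of_pos hs hR, Real.log_div hR.ne' hs.ne'] at hmono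
  rw [ec, ed]
  linarith

/-- Number of eigenvalues of `jac u n` within distance less than `r` of `E`. -/
def winCnt (E : ℝ) (u : ℕ → ℝ) (n : ℕ) (r : ℝ) : ℕ :=
  (Finset.univ.filter fun j => |eig u n j - E| < r).card

lemma winCnt_add (E : ℝ) (u : ℕ → ℝ) (n : ℕ) (r : ℝ) (hr : 0 < r) :
    winCnt E u n r + cntLe u n (E - r) = cntLt u n (E + r) := by
  classical
  unfold winCnt cntLe cntLt
  rw [← Finset.card_union_of_disjoint]
  · congr 1
    ext j
    simp only [Finset.mem_union, Finset.mem_filter, Finset.mem_univ, true_and, abs_lt]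
    constructor
    · rintro (h | h) <;> linarith
    · intro h
      rcases le_or_gt (eig u n j) (E - r) with h' | h'
      · exact Or.inr h'
      · left; constructor <;> linarith
  · rw [Finset.disjoint_filter]
    intro j _ h h'
    rw [abs_lt] at h
    linarith

/-- The truncation at distance `s` of `log |det (E - jac u n)|`. -/
def logS (E : ℝ) (u : ℕ → ℝ) (n : ℕ) (s : ℝ) : ℝ :=
  ∑ j, Real.log (max |eig u n j - E| s)

lemma abs_eig_sub_le (E : ℝ) (u : ℕ → ℝ) (n : ℕ) (U : ℝ) (hU : ∀ i, |u i| ≤ U) (j : Fin n) :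
    |eig u n j - E| ≤ U + 2 + |E| :=
  (abs_sub _ _).trans (by linarith [abs_eig_le u n U hU j])

/-- Truncated sums depend little on the potential when the counting functions do. -/
lemma logS_le_logS (E : ℝ) (u u' : ℕ → ℝ) (n : ℕ) (s R D : ℝ) (hs : 0 < s) (hsR : s ≤ R)
    (hu : ∀ j, |eig u n j - E| ≤ R) (hu' : ∀ j, |eig u' n j - E| ≤ R)
    (h1 : ∀ t, (cntLt u' n t : ℝ) ≤ cntLt u n t + D)
    (h2 : ∀ t, (cntLe u n t : ℝ) ≤ cntLe u' n t + D) :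
    logS E u n s ≤ logS E u' n s + 2 * D * (Real.log R - Real.log s) := by
  have := sum_log_max_le (fun j => |eig u n j - E|) (fun j => |eig u' n j - E|) s R (2 * D) hs hsR
    hu hu' (fun r hr => by
      have a := winCnt_add E u n r hr
      have b := winCnt_add E u' n r hr
      have c := h1 (E + r)
      have d := h2 (E - r)
      rw [← a, ← b] at c
      push_cast at c
      unfold winCnt at c
      linarith)
  simpa [logS] using this

lemma logS_split (E : ℝ) (u : ℕ → ℝ) (k l : ℕ) (s R : ℝ) (hs : 0 < s) (hsR : s ≤ R)
    (hR : 1 ≤ R) (U : ℝ) (hU : ∀ i, |u i| ≤ U) (hUR : U + 2 + |E| ≤ R) :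
    logS E u k s + logS E (fun i => u (k + 1 + i)) l s ≤
      logS E u (k + 1 + l) s + (Real.log R - Real.log s) := by
  have := sum_log_max_le (fun j => |splitEig u k l j - E|) (fun j => |eig u (k + 1 + l) j - E|)
    s R 1 hs hsR
    (fun j => by
      rcases j with j | j
      · exact (abs_eig_sub_le E u k U hU j).trans hUR
      · exact (abs_eig_sub_le E (fun i => u (k + 1 + i)) l U (fun i => hU _) j).trans hUR)
    (fun j => (abs_eig_sub_le E u _ U hU j).trans hUR)
    (fun r hr => by
      rw [card_split (fun y => |y - E| < r)]
      have a := winCnt_add E u k r hr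
      have a' := winCnt_add E (fun i => u (k + 1 + i)) l r hr
      have b := winCnt_add E u (k + 1 + l) r hr
      have c := cntLt_split_le u k l (E + r)
      have d := cntLe_split_ge u k l (E - r)
      unfold winCnt at a a' b
      norm_cast
      omega)
  rw [Fintype.sum_sum_type] at this
  simp only [splitEig, Sum.elim_inl, Sum.elim_inr, Fintype.card_sum, Fintype.card_fin, one_mul]
    at this
  have hlog := Real.log_nonneg hR
  unfold logS
  push_cast at this
  linarith

lemma abs_charP_le (E : ℝ) (u : ℕ → ℝ) (n : ℕ) (s : ℝ) (hs : 0 < s) :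
    |charP E u n| ≤ Real.exp (logS E u n s) := by
  rw [charP_eq_prod, Finset.abs_prod, logS, Real.exp_sum]
  refine Finset.prod_le_prod (fun _ _ => abs_nonneg _) fun j _ => ?_
  rw [Real.exp_log (lt_max_of_lt_right hs), abs_sub_comm]
  exact le_max_left _ _

/-- The truncation costs at most `log (1 / η)` per eigenvalue near `E` when no eigenvalue is within
`η` of `E`. -/
lemma le_abs_charP (E : ℝ) (u : ℕ → ℝ) (n : ℕ) (s η : ℝ) (hs : 0 < s) (hs1 : s ≤ 1) (hη : 0 < η)
    (hreg : ∀ j, η ≤ |eig u n j - E|) :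
    Real.exp (logS E u n s + winCnt E u n s * Real.log η) ≤ |charP E u n| := by
  rw [charP_eq_prod, Finset.abs_prod, logS, winCnt, Finset.card_filter]
  push_cast
  rw [Finset.sum_mul, ← Finset.sum_add_distrib, Real.exp_sum]
  refine Finset.prod_le_prod (fun _ _ => (Real.exp_pos _).le) fun j _ => ?_
  rw [abs_sub_comm E]
  have hpos : 0 < |eig u n j - E| := hη.trans_le (hreg j)
  rw [← Real.le_log_iff_exp_le hpos]
  split_ifs with h
  · rw [max_eq_right h.le]
    have := Real.log_nonpos hs.le hs1
    have := Real.log_le_log hη (hreg j)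
    linarith
  · rw [max_eq_left (not_lt.1 h)]
    simp

/-! ### The quasiperiodic potential and the arithmetic of the rotation -/

/-- The potential `i ↦ λ v (y + i α)` on the half-line. -/
def pot (lam : ℝ) (v : ℝ → ℝ) (α y : ℝ) : ℕ → ℝ := fun i => lam * v (y + i * α)

lemma v_add_int (v : ℝ → ℝ) (hper : ∀ x : ℝ, v (x + 1) = v x) (y : ℝ) (z : ℤ) :
    v (y + z) = v y := by
  have h : Function.Periodic v 1 := hper
  simpa using h.int_mul z y

lemma pot_add_int (lam : ℝ) (v : ℝ → ℝ) (hper : ∀ x : ℝ, v (x + 1) = v x) (α y : ℝ) (z : ℤ) :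
    pot lam v α (y + z) = pot lam v α y := by
  funext i
  rw [pot, pot, add_right_comm, v_add_int v hper]

lemma v_gain (γm γp : ℝ) (v : ℝ → ℝ) (hper : ∀ x : ℝ, v (x + 1) = v x)
    (hmono : ∀ x y : ℝ, 0 ≤ x → x ≤ y → y < 1 →
      γm * (y - x) ≤ v y - v x ∧ v y - v x ≤ γp * (y - x))
    (y δ : ℝ) (hδ : 0 ≤ δ) (hfl : ⌊y + δ⌋ = ⌊y⌋) : γm * δ ≤ v (y + δ) - v y := by
  have h1 : v y = v (Int.fract y) := by
    conv_lhs => rw [← Int.fract_add_floor y, v_add_int v hper]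
  have h2 : v (y + δ) = v (Int.fract (y + δ)) := by
    conv_lhs => rw [← Int.fract_add_floor (y + δ), v_add_int v hper]
  have h3 : Int.fract (y + δ) = Int.fract y + δ := by
    unfold Int.fract
    rw [hfl]; ring
  have h4 := (hmono (Int.fract y) (Int.fract (y + δ)) (Int.fract_nonneg _) (by linarith)
    (Int.fract_lt_one _)).1
  rw [h1, h2]
  rw [h3] at h4 ⊢
  linarith

lemma abs_v_le (γm γp : ℝ) (v : ℝ → ℝ) (hγm : 0 < γm) (hγp : 0 < γp)
    (hper : ∀ x : ℝ, v (x + 1) = v x) (hv0 : v 0 = 0)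
    (hmono : ∀ x y : ℝ, 0 ≤ x → x ≤ y → y < 1 →
      γm * (y - x) ≤ v y - v x ∧ v y - v x ≤ γp * (y - x)) (y : ℝ) : |v y| ≤ γp := by
  have h1 : v y = v (Int.fract y) := by
    conv_lhs => rw [← Int.fract_add_floor y, v_add_int v hper]
  have h := hmono 0 (Int.fract y) le_rfl (Int.fract_nonneg _) (Int.fract_lt_one _)
  rw [hv0, sub_zero, sub_zero] at h
  rw [h1, abs_le]
  have h2 := Int.fract_nonneg y
  have h3 := Int.fract_lt_one y
  constructor <;> nlinarith

/-- The sites at which the potential crosses its discontinuity when the phase moves from `y` to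
`y + δ`. -/
def jumpSet (n : ℕ) (α y δ : ℝ) : Finset (Fin n) :=
  Finset.univ.filter fun i => ⌊y + δ + (i : ℕ) * α⌋ ≠ ⌊y + (i : ℕ) * α⌋

lemma pot_gain (lam γm γp : ℝ) (v : ℝ → ℝ) (hlam : 0 < lam) (hper : ∀ x : ℝ, v (x + 1) = v x)
    (hmono : ∀ x y : ℝ, 0 ≤ x → x ≤ y → y < 1 →
      γm * (y - x) ≤ v y - v x ∧ v y - v x ≤ γp * (y - x))
    (n : ℕ) (α y δ t : ℝ) (hδ : 0 ≤ δ) (i : Fin n) (hi : i ∉ jumpSet n α y δ) :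
    pot lam v α y i - t ≤ pot lam v α (y + δ) i - (t + lam * γm * δ) := by
  simp only [jumpSet, Finset.mem_filter, Finset.mem_univ, true_and, not_not] at hi
  rw [add_right_comm] at hi
  have := v_gain γm γp v hper hmono _ δ hδ hi
  simp only [pot, add_right_comm y δ]
  nlinarith

lemma cntLt_shift (lam γm γp : ℝ) (v : ℝ → ℝ) (hlam : 0 < lam) (hper : ∀ x : ℝ, v (x + 1) = v x)
    (hmono : ∀ x y : ℝ, 0 ≤ x → x ≤ y → y < 1 →
      γm * (y - x) ≤ v y - v x ∧ v y - v x ≤ γp * (y - x))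
    (n : ℕ) (α y δ t : ℝ) (hδ : 0 ≤ δ) :
    cntLt (pot lam v α (y + δ)) n (t + lam * γm * δ) ≤
      cntLt (pot lam v α y) n t + (jumpSet n α y δ).card :=
  cntLt_mono _ _ _ _ _ _ fun i hi => pot_gain lam γm γp v hlam hper hmono n α y δ t hδ i hi

lemma cntLe_shift (lam γm γp : ℝ) (v : ℝ → ℝ) (hlam : 0 < lam) (hper : ∀ x : ℝ, v (x + 1) = v x)
    (hmono : ∀ x y : ℝ, 0 ≤ x → x ≤ y → y < 1 →
      γm * (y - x) ≤ v y - v x ∧ v y - v x ≤ γp * (y - x))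
    (n : ℕ) (α y δ t : ℝ) (hδ : 0 ≤ δ) :
    cntLe (pot lam v α (y + δ)) n (t + lam * γm * δ) ≤
      cntLe (pot lam v α y) n t + (jumpSet n α y δ).card :=
  cntLe_mono _ _ _ _ _ _ fun i hi => pot_gain lam γm γp v hlam hper hmono n α y δ t hδ i hi

lemma cntLt_anti (u : ℕ → ℝ) (n : ℕ) {t t' : ℝ} (h : t ≤ t') : cntLt u n t ≤ cntLt u n t' :=
  Finset.card_le_card (Finset.monotone_filter_right _ fun _ _ hj => lt_of_lt_of_le hj h)

lemma cntLe_anti (u : ℕ → ℝ) (n : ℕ) {t t' : ℝ} (h : t ≤ t') : cntLe u n t ≤ cntLe u n t' :=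
  Finset.card_le_card (Finset.monotone_filter_right _ fun _ _ hj => le_trans hj h)

lemma cntLt_le_cntLe (u : ℕ → ℝ) (n : ℕ) (t : ℝ) : cntLt u n t ≤ cntLe u n t :=
  Finset.card_le_card (Finset.monotone_filter_right _ fun _ _ hj => le_of_lt hj)

/-- A polynomial Diophantine condition with integer constants. -/
def IntDioph (α : ℝ) (B τ : ℕ) : Prop :=
  ∀ j : ℕ, 0 < j → ∀ z : ℤ, 1 ≤ B * (j : ℝ) ^ τ * |j * α - z|

lemma exists_intDioph (α : ℝ) (h : IsDiophantine α) : ∃ B τ : ℕ, 0 < B ∧ 0 < τ ∧ IntDioph α B τ := by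
  obtain ⟨C, τ, hC, hτ, h⟩ := h
  refine ⟨⌈1 / C⌉₊, ⌈τ⌉₊, Nat.ceil_pos.2 (by positivity), Nat.ceil_pos.2 hτ, fun j hj z => ?_⟩
  have h1 := h j hj
  unfold distInt at h1
  have h2 := h1.trans (round_le ((j : ℝ) * α) z)
  have hj1 : (1 : ℝ) ≤ j := by exact_mod_cast hj
  have hj0 : (0 : ℝ) < j := by linarith
  have h3 : (j : ℝ) ^ τ ≤ (j : ℝ) ^ ⌈τ⌉₊ := by
    rw [← Real.rpow_natCast]
    exact Real.rpow_le_rpow_of_exponent_le hj1 (Nat.le_ceil τ)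
  have h4 : (1 : ℝ) / C ≤ ⌈1 / C⌉₊ := Nat.le_ceil _
  calc (1 : ℝ) = 1 / C * (j : ℝ) ^ τ * (C * (j : ℝ) ^ (-τ)) := by
        rw [Real.rpow_neg hj0.le]
        have : (j : ℝ) ^ τ ≠ 0 := (Real.rpow_pos_of_pos hj0 _).ne'
        field_simp
    _ ≤ ⌈1 / C⌉₊ * (j : ℝ) ^ ⌈τ⌉₊ * |j * α - z| := by
        have : 0 < (j : ℝ) ^ τ := Real.rpow_pos_of_pos hj0 _
        have : 0 < (j : ℝ) ^ (-τ) := Real.rpow_pos_of_pos hj0 _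
        gcongr

/-- Two crossing sites `i < i'` satisfy `‖(i' - i) α‖ < δ`, so the Diophantine condition keeps them
more than `q` apart. -/
lemma card_jumpSet_le (α : ℝ) (B τ : ℕ) (hB : 0 < B) (hd : IntDioph α B τ) (n q : ℕ) (hq : 0 < q)
    (y δ : ℝ) (hδ : 0 ≤ δ) (hδq : B * (q : ℝ) ^ τ * δ ≤ 1) :
    (jumpSet n α y δ).card ≤ n / q + 1 := by
  have key : ∀ i i' : ℕ, i < i' → ⌊y + δ + i * α⌋ ≠ ⌊y + i * α⌋ →
      ⌊y + δ + i' * α⌋ ≠ ⌊y + i' * α⌋ → i + q < i' := by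
    intro i i' hii h1 h2
    by_contra hcon
    push Not at hcon
    have hz : ∀ i : ℕ, ⌊y + δ + i * α⌋ ≠ ⌊y + i * α⌋ →
        y + i * α < ⌊y + δ + i * α⌋ ∧ (⌊y + δ + i * α⌋ : ℝ) ≤ y + i * α + δ := by
      intro i hi
      refine ⟨?_, by linarith [Int.floor_le (y + δ + i * α)]⟩
      have h : ⌊y + i * α⌋ < ⌊y + δ + i * α⌋ :=
        lt_of_le_of_ne (Int.floor_mono (by linarith)) hi.symm
      exact Int.floor_lt.1 h
    obtain ⟨a1, a2⟩ := hz i h1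
    obtain ⟨b1, b2⟩ := hz i' h2
    have h3 := hd (i' - i) (by omega) (⌊y + δ + i' * α⌋ - ⌊y + δ + i * α⌋)
    push_cast [Nat.cast_sub hii.le] at h3
    set z := (⌊y + δ + i * α⌋ : ℝ)
    set z' := (⌊y + δ + i' * α⌋ : ℝ)
    have h4 : |((i' : ℝ) - i) * α - (z' - z)| < δ := by
      rw [abs_lt]; constructor <;> linarith
    have h5 : ((i' : ℝ) - i) ^ τ ≤ (q : ℝ) ^ τ := by
      have : (i' : ℝ) ≤ i + q := by exact_mod_cast hcon
      have : (i : ℝ) ≤ i' := by exact_mod_cast hii.le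
      exact pow_le_pow_left₀ (by linarith) (by linarith) _
    have hB' : (0 : ℝ) < B := by exact_mod_cast hB
    have hq' : (0 : ℝ) < q := by exact_mod_cast hq
    have h6 : (0 : ℝ) < B * (q : ℝ) ^ τ := by positivity
    have h7 : B * ((i' : ℝ) - i) ^ τ * |((i' : ℝ) - i) * α - (z' - z)| ≤
        B * (q : ℝ) ^ τ * |((i' : ℝ) - i) * α - (z' - z)| := by gcongr
    have h8 := mul_lt_mul_of_pos_left h4 h6
    linarith
  have hcard : (jumpSet n α y δ).card ≤ (Finset.range (n / q + 1)).card := by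
    refine Finset.card_le_card_of_injOn (fun i => i.1 / q) ?_ ?_
    · intro i _
      simp only [Finset.coe_range, Set.mem_Iio]
      exact Nat.lt_succ_of_le (Nat.div_le_div_right i.2.le)
    · intro i hi i' hi' heq
      simp only [jumpSet, Finset.coe_filter, Finset.mem_univ, true_and, Set.mem_ofPred_eq] at hi hi'
      simp only at heq
      by_contra hne
      have hgap : ∀ a b : ℕ, a + q < b → a / q ≠ b / q := by
        intro a b hab h
        have := Nat.div_le_div_right (c := q) hab.le
        rw [Nat.add_div_right _ hq] at this
        omega
      rcases lt_or_gt_of_ne (fun h => hne (Fin.ext h)) with h | h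
      · exact hgap _ _ (key _ _ h hi hi') heq
      · exact hgap _ _ (key _ _ h hi' hi) heq.symm
  simpa using hcard

lemma cntLt_rot (lam : ℝ) (v : ℝ → ℝ) (α y : ℝ) (n : ℕ) (t : ℝ) :
    cntLt (pot lam v α y) n t ≤ cntLt (pot lam v α (y + α)) n t + 1 := by
  have h1 := cntLt_split_ge (pot lam v α y) n 0 t
  have h2 := cntLt_split_le (pot lam v α y) 0 n t
  have h3 : (fun i => pot lam v α y (0 + 1 + i)) = pot lam v α (y + α) := by
    funext i
    simp only [pot]
    push_cast
    ring_nf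
  have h4 : cntLt (pot lam v α y) 0 t = 0 := by simp [cntLt]
  rw [h3, h4, zero_add, zero_add, add_comm 1 n] at h2
  rw [add_zero] at h1
  omega

lemma cntLe_rot (lam : ℝ) (v : ℝ → ℝ) (α y : ℝ) (n : ℕ) (t : ℝ) :
    cntLe (pot lam v α y) n t ≤ cntLe (pot lam v α (y + α)) n t + 1 := by
  have h1 := cntLe_split_ge (pot lam v α y) n 0 t
  have h2 := cntLe_split_le (pot lam v α y) 0 n t
  have h3 : (fun i => pot lam v α y (0 + 1 + i)) = pot lam v α (y + α) := by
    funext i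
    simp only [pot]
    push_cast
    ring_nf
  have h4 : cntLe (pot lam v α y) 0 t = 0 := by simp [cntLe]
  rw [h3, h4, zero_add, zero_add, add_comm 1 n] at h2
  rw [add_zero] at h1
  omega

lemma cnt_rot_iter (lam : ℝ) (v : ℝ → ℝ) (α y : ℝ) (n : ℕ) (t : ℝ) (k : ℕ) :
    cntLt (pot lam v α y) n t ≤ cntLt (pot lam v α (y + k * α)) n t + k ∧
    cntLe (pot lam v α y) n t ≤ cntLe (pot lam v α (y + k * α)) n t + k := by
  induction k with
  | zero => simp
  | succ k ih =>
    have h1 := cntLt_rot lam v α (y + k * α) n t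
    have h2 := cntLe_rot lam v α (y + k * α) n t
    rw [show y + k * α + α = y + (k + 1 : ℕ) * α by push_cast; ring] at h1 h2
    omega

/-- Effective density of the orbit: multiples of a Dirichlet denominator `j ≤ Q` move by a step of
size between `1 / (B Q ^ τ)` and `1 / Q`. -/
lemma exists_orbit_near (α : ℝ) (B τ : ℕ) (hd : IntDioph α B τ) (Q : ℕ) (hQ : 0 < Q) (y y' : ℝ) :
    ∃ (k : ℕ) (z : ℤ), k ≤ (B * Q ^ τ + 1) * Q ∧ 0 ≤ y + k * α - y' - z ∧
      y + k * α - y' - z ≤ 1 / Q := by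
  obtain ⟨m, j, hj, hjQ, hjm⟩ := Real.exists_int_int_abs_mul_sub_le α hQ
  lift j to ℕ using hj.le
  have hj' : 0 < j := by exact_mod_cast hj
  have hjQ' : j ≤ Q := by exact_mod_cast hjQ
  have hQr : (0 : ℝ) < Q := by exact_mod_cast hQ
  simp only [Int.cast_natCast] at hjm
  set β := (j : ℝ) * α - m with hβ
  have hβQ : |β| ≤ 1 / Q := hjm.trans (one_div_le_one_div_of_le hQr (by linarith))
  have h1 : 1 ≤ B * (Q : ℝ) ^ τ * |β| := by
    refine (hd j hj' m).trans ?_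
    have : (j : ℝ) ≤ Q := by exact_mod_cast hjQ'
    gcongr
  have hβ0 : 0 < |β| := by
    by_contra h
    have : |β| = 0 := le_antisymm (not_lt.1 h) (abs_nonneg _)
    rw [this] at h1
    norm_num at h1
  have hinv : ∀ θ : ℝ, 0 ≤ θ → θ < 1 → θ / |β| ≤ (B * Q ^ τ : ℕ) := by
    intro θ h0 hθ
    rw [div_le_iff₀ hβ0]
    push_cast
    linarith
  rcases le_total 0 β with hs | hs
  · rw [abs_of_nonneg hs] at *
    set θ := Int.fract (y' - y) with hθ
    refine ⟨⌈θ / β⌉₊ * j, ⌈θ / β⌉₊ * m - ⌊y' - y⌋, ?_, ?_⟩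
    · refine Nat.mul_le_mul ?_ hjQ'
      exact (Nat.ceil_le.2 (hinv θ (Int.fract_nonneg _) (Int.fract_lt_one _))).trans
        (Nat.le_succ _)
    · have e : y + ((⌈θ / β⌉₊ * j : ℕ) : ℝ) * α - y' - ((⌈θ / β⌉₊ * m - ⌊y' - y⌋ : ℤ) : ℝ) =
          ⌈θ / β⌉₊ * β - θ := by
        have := Int.fract_add_floor (y' - y)
        push_cast
        rw [hβ, hθ]
        linear_combination this
      rw [e]
      have hθ0 : 0 ≤ θ := Int.fract_nonneg _
      have c1 := Nat.le_ceil (θ / β)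
      have c2 := Nat.ceil_lt_add_one (div_nonneg hθ0 hs)
      rw [div_le_iff₀ hβ0] at c1
      have c3 := mul_lt_mul_of_pos_right c2 hβ0
      rw [add_mul, div_mul_cancel₀ _ hβ0.ne'] at c3
      constructor <;> linarith
  · rw [abs_of_nonpos hs] at *
    set θ := Int.fract (y - y') with hθ
    refine ⟨⌊θ / -β⌋₊ * j, ⌊θ / -β⌋₊ * m + ⌊y - y'⌋, ?_, ?_⟩
    · refine Nat.mul_le_mul ?_ hjQ'
      have hh := hinv θ (Int.fract_nonneg _) (Int.fract_lt_one _)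
      exact (Nat.floor_le_of_le hh).trans (Nat.le_succ _)
    · have e : y + ((⌊θ / -β⌋₊ * j : ℕ) : ℝ) * α - y' - ((⌊θ / -β⌋₊ * m + ⌊y - y'⌋ : ℤ) : ℝ) =
          θ - ⌊θ / -β⌋₊ * (-β) := by
        have := Int.fract_add_floor (y - y')
        push_cast
        rw [hβ, hθ]
        linear_combination -this
      rw [e]
      have hθ0 : 0 ≤ θ := Int.fract_nonneg _
      have c1 := Nat.floor_le (div_nonneg hθ0 hβ0.le)
      have c2 := Nat.lt_floor_add_one (θ / -β)
      rw [le_div_iff₀ hβ0] at c1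
      have c3 := mul_lt_mul_of_pos_right c2 hβ0
      rw [add_mul, div_mul_cancel₀ _ hβ0.ne'] at c3
      constructor <;> linarith

/-! ### Eigenvalue counts hardly depend on the phase -/

/-- Moving `y` along its orbit until it sits just above `y'` costs one eigenvalue per step, and the
remaining small displacement costs one eigenvalue per crossing site. -/
lemma cnt_discrepancy (lam γm γp : ℝ) (v : ℝ → ℝ) (hlam : 0 < lam) (hγm : 0 < γm)
    (hper : ∀ x : ℝ, v (x + 1) = v x)
    (hmono : ∀ x y : ℝ, 0 ≤ x → x ≤ y → y < 1 →
      γm * (y - x) ≤ v y - v x ∧ v y - v x ≤ γp * (y - x))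
    (α : ℝ) (B τ : ℕ) (hB : 0 < B) (hd : IntDioph α B τ) (n q : ℕ) (hq : 0 < q) (y y' t : ℝ) :
    cntLt (pot lam v α y) n t ≤ cntLt (pot lam v α y') n t +
      ((B * (B * q ^ τ) ^ τ + 1) * (B * q ^ τ) + (n / q + 1)) ∧
    cntLe (pot lam v α y) n t ≤ cntLe (pot lam v α y') n t +
      ((B * (B * q ^ τ) ^ τ + 1) * (B * q ^ τ) + (n / q + 1)) := by
  have hQ : 0 < B * q ^ τ := by positivity
  obtain ⟨k, z, hk, h0, h1⟩ := exists_orbit_near α B τ hd (B * q ^ τ) hQ y y'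
  set δ := y + k * α - y' - z with hδ
  have he : pot lam v α (y + k * α) = pot lam v α (y' + δ) := by
    rw [← pot_add_int lam v hper α (y' + δ) z, hδ]
    congr 1; ring
  have hQr : (0 : ℝ) < B * (q : ℝ) ^ τ := by exact_mod_cast hQ
  have hJ := card_jumpSet_le α B τ hB hd n q hq y' δ h0 (by
    push_cast at h1
    rw [le_div_iff₀ hQr] at h1
    linarith)
  have hg : t ≤ t + lam * γm * δ := by
    have : 0 ≤ lam * γm * δ := by positivity
    linarith
  obtain ⟨a1, a2⟩ := cnt_rot_iter lam v α y n t k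
  rw [he] at a1 a2
  have b1 := cntLt_shift lam γm γp v hlam hper hmono n α y' δ t h0
  have b2 := cntLe_shift lam γm γp v hlam hper hmono n α y' δ t h0
  have c1 := cntLt_anti (pot lam v α (y' + δ)) n hg
  have c2 := cntLe_anti (pot lam v α (y' + δ)) n hg
  omega

/-- A short energy window holds few eigenvalues: shifting the phase by `1 / (B q ^ τ)` moves almost
all of them across the window, while the counts are almost unchanged. -/
lemma winCnt_le (lam γm γp : ℝ) (v : ℝ → ℝ) (hlam : 0 < lam) (hγm : 0 < γm)
    (hper : ∀ x : ℝ, v (x + 1) = v x)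
    (hmono : ∀ x y : ℝ, 0 ≤ x → x ≤ y → y < 1 →
      γm * (y - x) ≤ v y - v x ∧ v y - v x ≤ γp * (y - x))
    (α : ℝ) (B τ : ℕ) (hB : 0 < B) (hd : IntDioph α B τ) (n q : ℕ) (hq : 0 < q) (y E s : ℝ)
    (hs : 0 < s) (hs2 : 2 * s * (B * (q : ℝ) ^ τ) ≤ lam * γm) :
    winCnt E (pot lam v α y) n s ≤
      ((B * (B * q ^ τ) ^ τ + 1) * (B * q ^ τ) + 2 * (n / q + 1)) := by
  have hQ : 0 < B * q ^ τ := by positivity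
  have hQr : (0 : ℝ) < B * (q : ℝ) ^ τ := by exact_mod_cast hQ
  set δ : ℝ := 1 / (B * (q : ℝ) ^ τ) with hδ
  have hδ0 : 0 ≤ δ := by positivity
  have hJ := card_jumpSet_le α B τ hB hd n q hq y δ hδ0 (by
    rw [hδ, mul_one_div_cancel hQr.ne'])
  have h1 := (cnt_discrepancy lam γm γp v hlam hγm hper hmono α B τ hB hd n q hq y (y + δ)
    (E + s)).1
  have h2 := cntLt_shift lam γm γp v hlam hper hmono n α y δ (E - s) hδ0
  have h3 : E + s ≤ E - s + lam * γm * δ := by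
    have : 2 * s ≤ lam * γm * δ := by
      rw [hδ, mul_one_div, le_div_iff₀ hQr]; exact hs2
    linarith
  have h4 := cntLt_anti (pot lam v α (y + δ)) n h3
  have h5 := cntLt_le_cntLe (pot lam v α y) n (E - s)
  have h6 := winCnt_add E (pot lam v α y) n s hs
  omega

/-- The choice `q ≈ (log n) ^ 2` makes every error term `o(n / log n)`. -/
lemma exists_params (lam γm γp : ℝ) (v : ℝ → ℝ) (hlam : 0 < lam) (hγm : 0 < γm)
    (hper : ∀ x : ℝ, v (x + 1) = v x)
    (hmono : ∀ x y : ℝ, 0 ≤ x → x ≤ y → y < 1 →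
      γm * (y - x) ≤ v y - v x ∧ v y - v x ≤ γp * (y - x))
    (α : ℝ) (B τ : ℕ) (hB : 0 < B) (hd : IntDioph α B τ) (E ε : ℝ) (hε : 0 < ε) :
    ∀ᶠ n : ℕ in atTop, ∃ D : ℕ, ∃ s : ℝ, 0 < s ∧ s ≤ 1 ∧ 1 ≤ s * n ∧ 1 ≤ D ∧
      D * Real.log n ≤ ε * n ∧
      (∀ k ≤ n, ∀ y y' t, cntLt (pot lam v α y) k t ≤ cntLt (pot lam v α y') k t + D ∧
        cntLe (pot lam v α y) k t ≤ cntLe (pot lam v α y') k t + D) ∧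
      ∀ y, winCnt E (pot lam v α y) n s ≤ D := by
  have hlog : Tendsto (fun n : ℕ => Real.log n) atTop atTop :=
    Real.tendsto_log_atTop.comp tendsto_natCast_atTop_atTop
  have hsmall : ∀ (m : ℕ) (c : ℝ), 0 < c →
      ∀ᶠ n : ℕ in atTop, Real.log n ^ m ≤ c * n := by
    intro m c hc
    have h := ((Real.isLittleO_pow_log_id_atTop (n := m)).comp_tendsto
      tendsto_natCast_atTop_atTop).bound hc
    filter_upwards [h] with n hn
    simp only [Function.comp, id, Real.norm_eq_abs, Nat.abs_cast] at hn
    exact (le_abs_self _).trans hn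
  set g := lam * γm with hg
  have hg0 : 0 < g := by positivity
  have hB' : (0 : ℝ) < B := by exact_mod_cast hB
  set C1 : ℝ := (B * (B : ℝ) ^ τ + 1) * B with hC1
  have hC10 : 0 < C1 := by positivity
  set m := τ * τ + τ with hm
  filter_upwards [hlog.eventually_ge_atTop (max 1 (8 / ε)),
    hsmall (2 * m + 1) (ε / (4 * (C1 * 2 ^ m))) (by positivity),
    hsmall 1 (ε / 8) (by positivity),
    hsmall (2 * τ) (g / (2 * B * 2 ^ τ)) (by positivity), eventually_ge_atTop 1] with
    n hL hA hA1 hS hn1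
  have hn0 : (0 : ℝ) < n := by exact_mod_cast hn1
  set L := Real.log n with hLdef
  have hL1 : 1 ≤ L := (le_max_left _ _).trans hL
  have hL2 : 8 / ε ≤ L := (le_max_right _ _).trans hL
  set q := ⌈L ^ 2⌉₊ with hq
  have hL20 : (0 : ℝ) < L ^ 2 := by positivity
  have hq0 : 0 < q := Nat.ceil_pos.2 hL20
  have hq0' : (0 : ℝ) < q := by exact_mod_cast hq0
  have hq1 : (1 : ℝ) ≤ q := by exact_mod_cast hq0
  have hqlo : L ^ 2 ≤ q := Nat.le_ceil _
  have hqhi : (q : ℝ) ≤ 2 * L ^ 2 := by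
    have := Nat.ceil_lt_add_one hL20.le
    nlinarith
  have hqτ : (q : ℝ) ^ τ ≤ 2 ^ τ * L ^ (2 * τ) := by
    calc (q : ℝ) ^ τ ≤ (2 * L ^ 2) ^ τ := pow_le_pow_left₀ hq0'.le hqhi _
      _ = _ := by rw [mul_pow, ← pow_mul]
  have hqm : (q : ℝ) ^ m ≤ 2 ^ m * L ^ (2 * m) := by
    calc (q : ℝ) ^ m ≤ (2 * L ^ 2) ^ m := pow_le_pow_left₀ hq0'.le hqhi _
      _ = _ := by rw [mul_pow, ← pow_mul]
  have hQ0 : (0 : ℝ) < B * (q : ℝ) ^ τ := by positivity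
  refine ⟨(B * (B * q ^ τ) ^ τ + 1) * (B * q ^ τ) + 2 * (n / q + 1),
    min (g / (2 * (B * (q : ℝ) ^ τ))) 1, lt_min (by positivity) one_pos, min_le_right _ _, ?_, ?_,
    ?_, ?_, ?_⟩
  · rw [min_mul_of_nonneg _ _ hn0.le]
    refine le_min ?_ (by rw [one_mul]; exact_mod_cast hn1)
    rw [div_mul_eq_mul_div, le_div_iff₀ (by positivity)]
    rw [div_mul_eq_mul_div, le_div_iff₀ (by positivity)] at hS
    nlinarith [mul_le_mul_of_nonneg_left hqτ hB'.le]
  · generalize n / q = w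
    omega
  · have hdiv : ((n / q : ℕ) : ℝ) ≤ n / q := Nat.cast_div_le
    have h1 : (n : ℝ) / q * L ≤ ε / 8 * n := by
      rw [div_mul_eq_mul_div, div_le_iff₀ hq0']
      rw [div_le_iff₀ hε] at hL2
      have : L * 8 ≤ ε * L ^ 2 := by nlinarith
      have : L ≤ ε / 8 * q := by nlinarith
      nlinarith
    have h2 : (B * (B * (q : ℝ) ^ τ) ^ τ + 1) * (B * (q : ℝ) ^ τ) ≤ C1 * (q : ℝ) ^ m := by
      have e : (B * (B * (q : ℝ) ^ τ) ^ τ + 1) ≤ (B * (B : ℝ) ^ τ + 1) * (q : ℝ) ^ (τ * τ) := by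
        rw [mul_pow, ← pow_mul, add_mul, mul_assoc, one_mul]
        linarith [one_le_pow₀ hq1 (n := τ * τ)]
      calc _ ≤ (B * (B : ℝ) ^ τ + 1) * (q : ℝ) ^ (τ * τ) * (B * (q : ℝ) ^ τ) := by gcongr
        _ = _ := by rw [hC1, hm, pow_add]; ring
    have h3 : C1 * (q : ℝ) ^ m * L ≤ ε / 4 * n := by
      rw [div_mul_eq_mul_div, le_div_iff₀ (by positivity)] at hA
      calc C1 * (q : ℝ) ^ m * L ≤ C1 * (2 ^ m * L ^ (2 * m)) * L := by gcongr
        _ = L ^ (2 * m + 1) * (4 * (C1 * 2 ^ m)) / 4 := by rw [pow_succ]; ring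
        _ ≤ ε * n / 4 := by gcongr
        _ = _ := by ring
    have hL0 : 0 ≤ L := by linarith
    push_cast
    rw [pow_one] at hA1
    calc ((B * (B * (q : ℝ) ^ τ) ^ τ + 1) * (B * (q : ℝ) ^ τ) + 2 * (((n / q : ℕ) : ℝ) + 1)) * L
        ≤ (C1 * (q : ℝ) ^ m + 2 * (n / q + 1)) * L := by gcongr
      _ = C1 * (q : ℝ) ^ m * L + 2 * (n / q * L) + 2 * L := by ring
      _ ≤ ε * n := by nlinarith
  · intro k hk y y' t
    have h := cnt_discrepancy lam γm γp v hlam hγm hper hmono α B τ hB hd k q hq0 y y' t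
    have := Nat.div_le_div_right (c := q) hk
    omega
  · intro y
    refine winCnt_le lam γm γp v hlam hγm hper hmono α B τ hB hd n q hq0 y E _
      (lt_min (by positivity) one_pos) ?_
    have := min_le_left (g / (2 * (B * (q : ℝ) ^ τ))) 1
    rw [le_div_iff₀ (by positivity)] at this
    linarith

/-! ### The lower bound supplied by the Lyapunov exponent -/

/-- Positivity of the infimum rules out the junk values of both the infimum and the integrals, so
every integral is a genuine average bounded below. -/
lemma exists_log_matNorm_ge (lam : ℝ) (v : ℝ → ℝ) (α E : ℝ) (h : 0 < lyap lam v α E) (n : ℕ)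
    (hn : 0 < n) :
    ∃ y, n * (lyap lam v α E / 2) ≤ Real.log (matNorm (transferMat lam v α E y n)) := by
  set γ := lyap lam v α E with hγ
  have hn' : (0 : ℝ) < n := by exact_mod_cast hn
  by_contra hcon
  push Not at hcon
  set F : ℕ+ → ℝ := fun n => (1 / (n : ℝ)) *
    ∫ x in (0:ℝ)..1, Real.log (matNorm (transferMat lam v α E x (n : ℕ))) with hF
  have hγF : γ = ⨅ n, F n := rfl
  have hbdd : BddBelow (Set.range F) := by
    by_contra hb
    rw [hγF, Real.iInf_of_not_bddBelow hb] at h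
    exact lt_irrefl _ h
  have h1 : γ ≤ F ⟨n, hn⟩ := hγF ▸ ciInf_le hbdd _
  have h2 : γ * n ≤ ∫ x in (0:ℝ)..1, Real.log (matNorm (transferMat lam v α E x n)) := by
    simp only [hF, PNat.mk_coe] at h1
    rw [one_div, inv_mul_eq_div, le_div_iff₀ hn'] at h1
    exact h1
  have hIntg : IntervalIntegrable (fun x => Real.log (matNorm (transferMat lam v α E x n)))
      volume 0 1 := by
    by_contra hni
    rw [intervalIntegral.integral_undef hni] at h2
    nlinarith
  have h3 := intervalIntegral.integral_mono_on (zero_le_one) hIntg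
    (intervalIntegrable_const (c := (n : ℝ) * (γ / 2))) (fun x _ => (hcon x).le)
  rw [intervalIntegral.integral_const] at h3
  simp only [sub_zero, one_smul] at h3
  nlinarith

lemma matNorm_le (M : Matrix (Fin 2) (Fin 2) ℝ) : ∃ i j, matNorm M ≤ 2 * |M i j| := by
  by_contra hcon
  push Not at hcon
  have hpos : 0 ≤ matNorm M := Real.sqrt_nonneg _
  have hsq : matNorm M ^ 2 = ∑ i, ∑ j, (M i j) ^ 2 := Real.sq_sqrt (by positivity)
  have hlt : ∀ i j, 4 * (M i j) ^ 2 < matNorm M ^ 2 := by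
    intro i j
    have h := hcon i j
    have : (2 * |M i j|) ^ 2 < matNorm M ^ 2 := pow_lt_pow_left₀ h (by positivity) two_ne_zero
    rw [mul_pow, sq_abs] at this
    linarith
  simp only [Fin.sum_univ_two] at hsq
  linarith [hlt 0 0, hlt 0 1, hlt 1 0, hlt 1 1]

lemma logS_zero (E : ℝ) (u : ℕ → ℝ) (s : ℝ) : logS E u 0 s = 0 := by
  simp [logS]

/-- At every scale some phase has truncated log-determinant at least `l γ / 2`, up to logarithmic
errors: the entries of the transfer matrix are determinants of size `l`, `l - 1` or `l - 2`, and
restoring the missing end sites changes the truncated log-determinant very little. -/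
lemma exists_logS_ge (lam : ℝ) (v : ℝ → ℝ) (α E : ℝ) (h : 0 < lyap lam v α E) (l : ℕ)
    (hl : 2 ≤ l) (s R U : ℝ) (hs : 0 < s) (hsR : s ≤ R) (hR : 1 ≤ R)
    (hU : ∀ y i, |pot lam v α y i| ≤ U) (hUR : U + 2 + |E| ≤ R) :
    ∃ y, l * (lyap lam v α E / 2) - Real.log 2 - 2 * (Real.log R - Real.log s) ≤
      logS E (pot lam v α y) l s := by
  obtain ⟨n, rfl⟩ : ∃ n, l = n + 2 := ⟨l - 2, by omega⟩
  obtain ⟨y, hy⟩ := exists_log_matNorm_ge lam v α E h (n + 2) (by omega)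
  have hW : 0 ≤ Real.log R - Real.log s := sub_nonneg.2 (Real.log_le_log hs hsR)
  have hlast : ∀ (y : ℝ) (k : ℕ), logS E (pot lam v α y) k s ≤
      logS E (pot lam v α y) (k + 1) s + (Real.log R - Real.log s) := by
    intro y k
    have := logS_split E (pot lam v α y) k 0 s R hs hsR hR U (hU y) hUR
    rw [logS_zero, add_zero, add_zero] at this
    exact this
  have hfirst : ∀ (y : ℝ) (k : ℕ), logS E (fun i => pot lam v α y (i + 1)) k s ≤
      logS E (pot lam v α y) (k + 1) s + (Real.log R - Real.log s) := by
    intro y k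
    have := logS_split E (pot lam v α y) 0 k s R hs hsR hR U (hU y) hUR
    rw [logS_zero, zero_add, zero_add] at this
    simpa only [add_comm 1] using this
  set M := transferMat lam v α E y (n + 2) with hM
  have hM0 : 0 < matNorm M := by
    have hpos : 0 ≤ matNorm M := Real.sqrt_nonneg _
    refine lt_of_le_of_ne hpos fun h0 => ?_
    rw [← h0, Real.log_zero] at hy
    have : (0 : ℝ) < (n + 2 : ℕ) * (lyap lam v α E / 2) := by positivity
    linarith
  obtain ⟨i, j, hij⟩ := matNorm_le M
  refine ⟨y, ?_⟩
  have key : ∀ T : ℝ, |M i j| ≤ Real.exp T → T ≤ logS E (pot lam v α y) (n + 2) s +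
      2 * (Real.log R - Real.log s) → (n + 2 : ℕ) * (lyap lam v α E / 2) - Real.log 2 -
      2 * (Real.log R - Real.log s) ≤ logS E (pot lam v α y) (n + 2) s := by
    intro T hT hT'
    have h1 : Real.log (matNorm M) ≤ Real.log 2 + T := by
      calc Real.log (matNorm M) ≤ Real.log (2 * Real.exp T) :=
            Real.log_le_log hM0 (by linarith)
        _ = _ := by rw [Real.log_mul two_ne_zero (Real.exp_pos _).ne', Real.log_exp]
    linarith
  have hMe := transferMat_eq lam v α E y n
  rw [← hM] at hMe
  have hA := hlast y (n + 1)
  have hB := hfirst y (n + 1)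
  have hC := hfirst y n
  fin_cases i <;> fin_cases j
  · refine key _ ?_ (le_add_of_nonneg_right (by positivity))
    have := abs_charP_le E (pot lam v α y) (n + 2) s hs
    rw [hMe]
    exact this
  · refine key _ (?_ : _ ≤ Real.exp (logS E (fun i => pot lam v α y (i + 1)) (n + 1) s))
      (hB.trans (by linarith))
    simpa [hMe, pot] using abs_charP_le E (fun i => pot lam v α y (i + 1)) (n + 1) s hs
  · refine key _ (?_ : _ ≤ Real.exp (logS E (pot lam v α y) (n + 1) s)) (hA.trans (by linarith))
    have := abs_charP_le E (pot lam v α y) (n + 1) s hs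
    rw [hMe]
    exact this
  · refine key _ (?_ : _ ≤ Real.exp (logS E (fun i => pot lam v α y (i + 1)) n s))
      (by linarith)
    simpa [hMe, pot] using abs_charP_le E (fun i => pot lam v α y (i + 1)) n s hs

/-! ### Decay across regular boxes -/

/-- The resonance width at scale `n`: a box of size `n` is regular when it has no eigenvalue this
close to `E`. It is a quarter of the gain of the potential under the smallest displacement
`1 / (B (2 n) ^ τ)` between phases whose indices differ by at most `2 n`. -/
def resWidth (lam γm : ℝ) (B τ n : ℕ) : ℝ := lam * γm / (4 * B * (2 * n) ^ τ)

set_option maxHeartbeats 1000000 in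
/-- For a regular box, the truncated log-determinants are almost additive and almost independent of
the phase, so the ratio of a sub-determinant to the full one is governed by the growth, at least
`l γ / 2`, of the complementary block of size `l ≥ n / 8`. -/
lemma regular_decay (lam γm γp : ℝ) (v : ℝ → ℝ) (hlam : 0 < lam) (hγm : 0 < γm) (hγp : 0 < γp)
    (hper : ∀ x : ℝ, v (x + 1) = v x) (hv0 : v 0 = 0)
    (hmono : ∀ x y : ℝ, 0 ≤ x → x ≤ y → y < 1 →
      γm * (y - x) ≤ v y - v x ∧ v y - v x ≤ γp * (y - x))
    (α : ℝ) (B τ : ℕ) (hB : 0 < B) (hd : IntDioph α B τ) (E : ℝ) (h : 0 < lyap lam v α E) :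
    ∀ᶠ n : ℕ in atTop, ∀ y, (∀ j, resWidth lam γm B τ n ≤ |eig (pot lam v α y) n j - E|) →
      ∀ k l : ℕ, k + 1 + l = n → n ≤ 8 * k → n ≤ 8 * l →
      |charP E (pot lam v α y) k| ≤
        Real.exp (-(lyap lam v α E / 32) * n) * |charP E (pot lam v α y) n| ∧
      |charP E (fun i => pot lam v α y (k + 1 + i)) l| ≤
        Real.exp (-(lyap lam v α E / 32) * n) * |charP E (pot lam v α y) n| := by
  set γ := lyap lam v α E with hγ
  have hg0 : 0 < lam * γm := by positivity
  have hB' : (0 : ℝ) < B := by exact_mod_cast hB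
  set U := lam * γp with hUdef
  have hU : ∀ y i, |pot lam v α y i| ≤ U := by
    intro y i
    rw [pot, abs_mul, abs_of_pos hlam]
    exact mul_le_mul_of_nonneg_left (abs_v_le γm γp v hγm hγp hper hv0 hmono _) hlam.le
  set R := U + 2 + |E| with hR
  have hU0 : 0 < U := by positivity
  have hR1 : 1 ≤ R := by linarith [abs_nonneg E]
  have hlog : Tendsto (fun n : ℕ => Real.log n) atTop atTop :=
    Real.tendsto_log_atTop.comp tendsto_natCast_atTop_atTop
  filter_upwards [exists_params lam γm γp v hlam hγm hper hmono α B τ hB hd E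
    (γ / (32 * (τ + 12))) (by positivity), eventually_ge_atTop 16,
    hlog.eventually_ge_atTop (Real.log R),
    hlog.eventually_ge_atTop (Real.log (4 * B * 2 ^ τ / (lam * γm))),
    hlog.eventually_ge_atTop (Real.log 2)] with n hpar hn16 hLR hLη hL2
  obtain ⟨D, s, hs0, hs1, hsn, hD1, hDn, hcnt, hwin⟩ := hpar
  intro y hreg k l hkl hk hl
  have hn0 : (0 : ℝ) < n := by
    have : 0 < n := by omega
    exact_mod_cast this
  set L := Real.log n with hL
  have hL0 : 0 < L := lt_of_lt_of_le (Real.log_pos one_lt_two) hL2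
  have hsR : s ≤ R := hs1.trans hR1
  set W := Real.log R - Real.log s with hWdef
  have hW0 : 0 ≤ W := sub_nonneg.2 (Real.log_le_log hs0 hsR)
  have hW : W ≤ 2 * L := by
    have : 0 ≤ Real.log s + L := by
      rw [hL, ← Real.log_mul hs0.ne' hn0.ne']
      exact Real.log_nonneg hsn
    linarith
  have hη0 : 0 < resWidth lam γm B τ n := by
    unfold resWidth; positivity
  have hη : -((τ + 1) * L) ≤ Real.log (resWidth lam γm B τ n) := by
    have e : resWidth lam γm B τ n = (4 * B * 2 ^ τ / (lam * γm))⁻¹ * ((n : ℝ) ^ τ)⁻¹ := by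
      unfold resWidth
      rw [mul_pow]
      field_simp
    rw [e, Real.log_mul (by positivity) (by positivity), Real.log_inv, Real.log_inv, Real.log_pow]
    linarith
  have hDr : (1 : ℝ) ≤ D := by exact_mod_cast hD1
  have hDL : L ≤ D * L := by nlinarith
  have hwη : -(D * ((τ + 1) * L)) ≤
      winCnt E (pot lam v α y) n s * Real.log (resWidth lam γm B τ n) := by
    have h1 : (winCnt E (pot lam v α y) n s : ℝ) ≤ D := by exact_mod_cast hwin y
    have h2 : (0 : ℝ) ≤ winCnt E (pot lam v α y) n s := Nat.cast_nonneg _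
    have h3 : (0 : ℝ) ≤ (τ + 1) * L := by positivity
    nlinarith [mul_le_mul_of_nonneg_left hη h2, mul_le_mul_of_nonneg_right h1 h3]
  have hfull := le_abs_charP E (pot lam v α y) n s _ hs0 hs1 hη0 hreg
  have hshift : (fun i => pot lam v α y (k + 1 + i)) =
      pot lam v α (y + ((k + 1 : ℕ) : ℝ) * α) := by
    funext i
    simp only [pot]
    push_cast
    ring_nf
  have hsplit := logS_split E (pot lam v α y) k l s R hs0 hsR hR1 U (hU y) le_rfl
  rw [hkl, hshift] at hsplit
  rw [hshift]
  have hlow : ∀ (m : ℕ) (z : ℝ), m ≤ n → n ≤ 8 * m →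
      n * (γ / 16) - L - 4 * L - 4 * (D * L) ≤ logS E (pot lam v α z) m s := by
    intro m z hmn hm
    obtain ⟨w, hw⟩ := exists_logS_ge lam v α E h m (by omega) s R U hs0 hsR hR1 hU le_rfl
    have hR' : ∀ z j, |eig (pot lam v α z) m j - E| ≤ R := fun z j =>
      abs_eig_sub_le E _ m U (hU z) j
    have h1 := logS_le_logS E (pot lam v α w) (pot lam v α z) m s R D hs0 hsR (hR' w) (hR' z)
      (fun t => by exact_mod_cast (hcnt m hmn z w t).1)
      (fun t => by exact_mod_cast (hcnt m hmn w z t).2)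
    have h2 : (n : ℝ) ≤ 8 * m := by exact_mod_cast hm
    have h3 : (D : ℝ) * W ≤ D * (2 * L) := by gcongr
    rw [← hWdef] at h1
    rw [← hWdef, ← hγ] at hw
    nlinarith
  have hDn' : (τ + 12) * (D * L) ≤ γ / 32 * n := by
    have : (0 : ℝ) < τ + 12 := by positivity
    calc (τ + 12) * (D * L) ≤ (τ + 12) * (γ / (32 * (τ + 12)) * n) := by gcongr
      _ = γ / 32 * n := by field_simp
  have hk' := hlow k y (by omega) hk
  have hl' := hlow l (y + ((k + 1 : ℕ) : ℝ) * α) (by omega) hl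
  have fin : ∀ T : ℝ, ∀ P : ℝ, |P| ≤ Real.exp T →
      T + (n * (γ / 16) - L - 4 * L - 4 * (D * L)) ≤ logS E (pot lam v α y) n s + W →
      |P| ≤ Real.exp (-(γ / 32) * n) * |charP E (pot lam v α y) n| := by
    intro T P hP hT
    calc |P| ≤ Real.exp T := hP
      _ ≤ Real.exp (-(γ / 32) * n + (logS E (pot lam v α y) n s +
          winCnt E (pot lam v α y) n s * Real.log (resWidth lam γm B τ n))) := by
        apply Real.exp_le_exp.2
        nlinarith
      _ ≤ _ := by
        rw [Real.exp_add]
        gcongr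
  exact ⟨fin _ _ (abs_charP_le E (pot lam v α y) k s hs0) (by linarith),
    fin _ _ (abs_charP_le E (pot lam v α (y + ((k + 1 : ℕ) : ℝ) * α)) l s hs0) (by linarith)⟩

/-! ### At most `n` resonant boxes -/

/-- The box of size `n` at phase `y` is resonant: it has an eigenvalue within the resonance width of
`E`. -/
def Resonant (lam γm : ℝ) (v : ℝ → ℝ) (α : ℝ) (B τ : ℕ) (E : ℝ) (n : ℕ) (y : ℝ) : Prop :=
  ∃ j, |eig (pot lam v α y) n j - E| < resWidth lam γm B τ n

/-- The number of eigenvalues up to the upper edge of the resonance window, corrected for the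
crossings of the discontinuity; it is nonincreasing in the phase. -/
def phaseIndex (lam γm : ℝ) (v : ℝ → ℝ) (α : ℝ) (B τ : ℕ) (E : ℝ) (n : ℕ) (y : ℝ) : ℤ :=
  cntLe (pot lam v α y) n (E + resWidth lam γm B τ n) - ∑ i : Fin n, ⌊y + (i : ℕ) * α⌋

lemma phaseIndex_add_int (lam γm : ℝ) (v : ℝ → ℝ) (hper : ∀ x : ℝ, v (x + 1) = v x) (α : ℝ)
    (B τ : ℕ) (E : ℝ) (n : ℕ) (y : ℝ) (z : ℤ) :
    phaseIndex lam γm v α B τ E n (y + z) = phaseIndex lam γm v α B τ E n y - n * z := by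
  unfold phaseIndex
  rw [pot_add_int lam v hper]
  have : ∀ i : Fin n, ⌊y + z + (i : ℕ) * α⌋ = ⌊y + (i : ℕ) * α⌋ + z := by
    intro i
    rw [add_right_comm, Int.floor_add_intCast]
  simp only [this, Finset.sum_add_distrib, Finset.sum_const, Finset.card_univ, Fintype.card_fin,
    nsmul_eq_mul]
  ring

lemma card_jumpSet_le_sum (n : ℕ) (α y δ : ℝ) (hδ : 0 ≤ δ) :
    ((jumpSet n α y δ).card : ℤ) ≤
      ∑ i : Fin n, ⌊y + δ + (i : ℕ) * α⌋ - ∑ i : Fin n, ⌊y + (i : ℕ) * α⌋ := by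
  rw [jumpSet, Finset.card_filter, ← Finset.sum_sub_distrib]
  push_cast
  refine Finset.sum_le_sum fun i _ => ?_
  have h : ⌊y + (i : ℕ) * α⌋ ≤ ⌊y + δ + (i : ℕ) * α⌋ := Int.floor_mono (by linarith)
  split_ifs with hne
  · have := lt_of_le_of_ne h (Ne.symm hne)
    omega
  · omega

/-- Leaving a resonant phase by more than the resonance width pushes the resonant eigenvalue out of
the window, so the index drops strictly. -/
lemma phaseIndex_lt (lam γm γp : ℝ) (v : ℝ → ℝ) (hlam : 0 < lam)
    (hper : ∀ x : ℝ, v (x + 1) = v x)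
    (hmono : ∀ x y : ℝ, 0 ≤ x → x ≤ y → y < 1 →
      γm * (y - x) ≤ v y - v x ∧ v y - v x ≤ γp * (y - x))
    (α : ℝ) (B τ : ℕ) (E : ℝ) (n : ℕ) (y δ : ℝ) (hδ : 0 ≤ δ)
    (hgδ : 2 * resWidth lam γm B τ n ≤ lam * γm * δ)
    (hres : Resonant lam γm v α B τ E n y) :
    phaseIndex lam γm v α B τ E n (y + δ) < phaseIndex lam γm v α B τ E n y := by
  set η := resWidth lam γm B τ n with hη
  have h1 := cntLe_shift lam γm γp v hlam hper hmono n α y δ (E - η) hδ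
  have h2 : cntLe (pot lam v α (y + δ)) n (E + η) ≤
      cntLe (pot lam v α (y + δ)) n (E - η + lam * γm * δ) := cntLe_anti _ _ (by linarith)
  have h3 := card_jumpSet_le_sum n α y δ hδ
  have h4 : cntLe (pot lam v α y) n (E - η) < cntLe (pot lam v α y) n (E + η) := by
    obtain ⟨j, hj⟩ := hres
    rw [abs_lt, ← hη] at hj
    refine Finset.card_lt_card (Finset.ssubset_iff_subset_ne.2 ⟨?_, fun he => ?_⟩)
    · exact Finset.monotone_filter_right _ fun _ _ hi => le_trans hi (by linarith)
    · have : j ∈ Finset.univ.filter fun j => eig (pot lam v α y) n j ≤ E + η := by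
        simp only [Finset.mem_filter, Finset.mem_univ, true_and]; linarith
      rw [← he] at this
      simp only [Finset.mem_filter, Finset.mem_univ, true_and] at this
      linarith
  unfold phaseIndex
  rw [← hη]
  omega

lemma intDioph_int (α : ℝ) (B τ : ℕ) (hd : IntDioph α B τ) (n : ℕ) (d : ℤ) (hd0 : d ≠ 0)
    (hdn : |d| ≤ 2 * n) (z : ℤ) : 1 ≤ B * (2 * (n : ℝ)) ^ τ * |d * α - z| := by
  have h0 : 0 < d.natAbs := Int.natAbs_pos.2 hd0
  have h1 : (d.natAbs : ℝ) ≤ 2 * n := by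
    have : d.natAbs ≤ 2 * n := by
      rw [abs_le] at hdn
      omega
    exact_mod_cast this
  have h2 : ∀ w : ℤ, 1 ≤ B * (2 * (n : ℝ)) ^ τ * |d.natAbs * α - w| := by
    intro w
    refine (hd d.natAbs h0 w).trans ?_
    gcongr
  rcases Int.natAbs_eq d with h | h
  · have h3 := h2 z
    have e : (d : ℝ) = d.natAbs := by
      conv_lhs => rw [h]
      rw [Int.cast_natCast]
    rwa [← e] at h3
  · have h3 := h2 (-z)
    have e : (d.natAbs : ℝ) = -d := by
      have : (d.natAbs : ℤ) = -d := by omega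
      rw [← Int.cast_natCast, this, Int.cast_neg]
    rw [e, show -(d : ℝ) * α - (-z : ℤ) = -(d * α - z) by push_cast; ring, abs_neg] at h3
    exact h3

/-- Going once around the circle lowers the index by exactly `n`, and by at least one between
distinct resonant phases; hence the indices of resonant phases are distinct modulo `n`. -/
lemma card_resonant_le (lam γm γp : ℝ) (v : ℝ → ℝ) (hlam : 0 < lam) (hγm : 0 < γm)
    (hper : ∀ x : ℝ, v (x + 1) = v x)
    (hmono : ∀ x y : ℝ, 0 ≤ x → x ≤ y → y < 1 →
      γm * (y - x) ≤ v y - v x ∧ v y - v x ≤ γp * (y - x))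
    (α : ℝ) (B τ : ℕ) (hB : 0 < B) (hd : IntDioph α B τ) (E x : ℝ) (n : ℕ) (hn : 0 < n)
    (A : Finset ℤ) (hA : ∀ a ∈ A, Resonant lam γm v α B τ E n (x + a * α))
    (hdiam : ∀ a ∈ A, ∀ a' ∈ A, |a - a'| ≤ 2 * n) : A.card ≤ n := by
  set F := phaseIndex lam γm v α B τ E n with hF
  have hn' : (0 : ℤ) < n := by exact_mod_cast hn
  have hnr : (0 : ℝ) < n := by exact_mod_cast hn
  have hB' : (0 : ℝ) < B := by exact_mod_cast hB
  have hcard : A.card ≤ (Finset.Ico (0 : ℤ) n).card := by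
    refine Finset.card_le_card_of_injOn (fun a => F (x + a * α) % n) ?_ ?_
    · intro a _
      simp only [Finset.coe_Ico, Set.mem_Ico]
      exact ⟨Int.emod_nonneg _ hn'.ne', Int.emod_lt_of_pos _ hn'⟩
    · intro a ha a' ha' heq
      simp only at heq
      by_contra hne
      set z := ⌊((a' - a : ℤ) : ℝ) * α⌋ with hz
      set δ := ((a' - a : ℤ) : ℝ) * α - z with hδ
      have hδ0 : 0 ≤ δ := sub_nonneg.2 (Int.floor_le _)
      have hδ1 : 0 ≤ 1 - δ := by linarith [Int.lt_floor_add_one (((a' - a : ℤ) : ℝ) * α)]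
      have hne' : a' - a ≠ 0 := sub_ne_zero.2 (Ne.symm hne)
      have hw : ∀ t : ℝ, 1 ≤ B * (2 * (n : ℝ)) ^ τ * t →
          2 * resWidth lam γm B τ n ≤ lam * γm * t := by
        intro t ht
        unfold resWidth
        rw [mul_div_assoc', div_le_iff₀ (by positivity)]
        have : lam * γm ≤ lam * γm * (B * (2 * (n : ℝ)) ^ τ * t) :=
          le_mul_of_one_le_right (by positivity) ht
        have : 0 < lam * γm := by positivity
        linarith
      have d1 := intDioph_int α B τ hd n (a' - a) hne' (hdiam a' ha' a ha) z
      rw [← hδ, abs_of_nonneg hδ0] at d1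
      have d2 := intDioph_int α B τ hd n (a' - a) hne' (hdiam a' ha' a ha) (z + 1)
      rw [show ((a' - a : ℤ) : ℝ) * α - ((z + 1 : ℤ) : ℝ) = -(1 - δ) by rw [hδ]; push_cast; ring,
        abs_neg, abs_of_nonneg hδ1] at d2
      have hy : x + a' * α = x + a * α + δ + z := by
        rw [hδ]; push_cast; ring
      have hres' : Resonant lam γm v α B τ E n (x + a * α + δ) := by
        have := hA a' ha'
        rw [hy] at this
        unfold Resonant at this ⊢
        rwa [pot_add_int lam v hper] at this
      have f1 := phaseIndex_lt lam γm γp v hlam hper hmono α B τ E n (x + a * α) δ hδ0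
        (hw _ d1) (hA a ha)
      have f2 := phaseIndex_lt lam γm γp v hlam hper hmono α B τ E n (x + a * α + δ) (1 - δ) hδ1
        (hw _ d2) hres'
      rw [show x + a * α + δ + (1 - δ) = x + a * α + ((1 : ℤ) : ℝ) by push_cast; ring,
        phaseIndex_add_int lam γm v hper] at f2
      rw [hy, hF, phaseIndex_add_int lam γm v hper, Int.sub_mul_emod_self_left] at heq
      have hdvd := Int.ModEq.dvd heq.symm
      have hle := Int.le_of_dvd (by linarith) hdvd
      linarith
  simpa using hcard

/-! ### Decay of generalized eigenfunctions -/

lemma regular_solution_decay (lam γm γp : ℝ) (v : ℝ → ℝ) (hlam : 0 < lam) (hγm : 0 < γm)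
    (hγp : 0 < γp) (hper : ∀ x : ℝ, v (x + 1) = v x) (hv0 : v 0 = 0)
    (hmono : ∀ x y : ℝ, 0 ≤ x → x ≤ y → y < 1 →
      γm * (y - x) ≤ v y - v x ∧ v y - v x ≤ γp * (y - x))
    (α : ℝ) (B τ : ℕ) (hB : 0 < B) (hd : IntDioph α B τ) (x E : ℝ) (h : 0 < lyap lam v α E)
    (ψ : ℤ → ℝ)
    (heig : ∀ m : ℤ, ψ (m + 1) + ψ (m - 1) + lam * v (x + (m : ℝ) * α) * ψ m = E * ψ m) :
    ∀ᶠ n : ℕ in atTop, ∀ a : ℤ, ¬ Resonant lam γm v α B τ E n (x + a * α) →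
      ∀ k l : ℕ, k + 1 + l = n → n ≤ 8 * k → n ≤ 8 * l →
      |ψ (a + k)| ≤ Real.exp (-(lyap lam v α E / 32) * n) * (|ψ (a - 1)| + |ψ (a + n)|) := by
  filter_upwards [regular_decay lam γm γp v hlam hγm hγp hper hv0 hmono α B τ hB hd E h,
    eventually_gt_atTop 0] with n hdec hn a ha k l hkl hk hl
  have hn' : (0 : ℝ) < n := by exact_mod_cast hn
  have hB' : (0 : ℝ) < B := by exact_mod_cast hB
  have hreg : ∀ j, resWidth lam γm B τ n ≤ |eig (pot lam v α (x + a * α)) n j - E| := by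
    intro j
    by_contra hj
    exact ha ⟨j, not_le.1 hj⟩
  have hη0 : 0 < resWidth lam γm B τ n := by
    unfold resWidth; positivity
  have hP : 0 < |charP E (pot lam v α (x + a * α)) n| :=
    lt_of_lt_of_le (Real.exp_pos _)
      (le_abs_charP E (pot lam v α (x + a * α)) n 1 _ one_pos le_rfl hη0 hreg)
  obtain ⟨h1, h2⟩ := hdec (x + a * α) hreg k l hkl hk hl
  have hsol := charP_mul_solution E (pot lam v α (x + a * α)) (fun i => ψ (a - 1 + i)) (by
    intro i
    have := heig (a + i)
    have e1 : a - 1 + ((i + 2 : ℕ) : ℤ) = a + i + 1 := by push_cast; ring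
    have e2 : a - 1 + ((i + 1 : ℕ) : ℤ) = a + i := by push_cast; ring
    have e3 : a - 1 + (i : ℤ) = a + i - 1 := by ring
    have e4 : x + ((a + i : ℤ) : ℝ) * α = x + a * α + i * α := by push_cast; ring
    simp only [e1, e2, e3, pot]
    rw [e4] at this
    linarith) k l
  have e1 : a - 1 + ((k + 1 : ℕ) : ℤ) = a + k := by push_cast; ring
  have e2 : a - 1 + ((0 : ℕ) : ℤ) = a - 1 := by simp
  have e3 : a - 1 + ((k + l + 2 : ℕ) : ℤ) = a + n := by rw [← hkl]; push_cast; ring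
  simp only [e1, e2, e3, hkl] at hsol
  set P := charP E (pot lam v α (x + a * α)) n
  set ρ := Real.exp (-(lyap lam v α E / 32) * n)
  refine le_of_mul_le_mul_left ?_ hP
  calc |P| * |ψ (a + k)| = |P * ψ (a + k)| := (abs_mul _ _).symm
    _ ≤ |charP E (fun i => pot lam v α (x + a * α) (k + 1 + i)) l| * |ψ (a - 1)| +
        |charP E (pot lam v α (x + a * α)) k| * |ψ (a + n)| := by
      rw [hsol]
      refine (abs_add_le _ _).trans ?_
      rw [abs_mul, abs_mul]
    _ ≤ ρ * |P| * |ψ (a - 1)| + ρ * |P| * |ψ (a + n)| := by gcongr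
    _ = |P| * (ρ * (|ψ (a - 1)| + |ψ (a + n)|)) := by ring

lemma eventually_rpow_mul_exp_le (C p c ε : ℝ) (hC : 0 < C) (hc : 0 < c) (hε : 0 < ε) :
    ∀ᶠ n : ℕ in atTop, n * (Real.exp (-c * n) * (2 * (C * (4 * (n : ℝ)) ^ p))) ≤ ε := by
  have h := ((isLittleO_rpow_exp_pos_mul_atTop (p + 1) hc).comp_tendsto
    tendsto_natCast_atTop_atTop).bound (c := ε / (2 * C * 4 ^ p)) (by positivity)
  filter_upwards [h, eventually_gt_atTop 0] with n hn hn0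
  have hn' : (0 : ℝ) < n := by exact_mod_cast hn0
  simp only [Function.comp, Real.norm_eq_abs, Real.abs_exp] at hn
  rw [abs_of_pos (by positivity), Real.rpow_add hn', Real.rpow_one, div_mul_eq_mul_div,
    le_div_iff₀ (by positivity)] at hn
  rw [Real.mul_rpow (by norm_num) hn'.le, neg_mul, Real.exp_neg]
  have he := Real.exp_pos (c * n)
  rw [show (n : ℝ) * ((Real.exp (c * n))⁻¹ * (2 * (C * (4 ^ p * (n : ℝ) ^ p)))) =
    ((n : ℝ) ^ p * n * (2 * C * 4 ^ p)) / Real.exp (c * n) by field_simp, div_le_iff₀ he]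
  exact hn

/-- The boxes whose middle part contains a site where `ψ` does not vanish are all resonant. As at
most `n` boxes are resonant, a site at distance `n` lies in the middle of a regular box. -/
lemma solution_decay (lam γm γp : ℝ) (v : ℝ → ℝ) (hlam : 0 < lam) (hγm : 0 < γm)
    (hγp : 0 < γp) (hper : ∀ x : ℝ, v (x + 1) = v x) (hv0 : v 0 = 0)
    (hmono : ∀ x y : ℝ, 0 ≤ x → x ≤ y → y < 1 →
      γm * (y - x) ≤ v y - v x ∧ v y - v x ≤ γp * (y - x))
    (α : ℝ) (hdio : IsDiophantine α) (x E : ℝ) (h : 0 < lyap lam v α E)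
    (ψ : ℤ → ℝ) (C p : ℝ) (hC : 0 < C) (hp : 0 < p)
    (hbd : ∀ m : ℤ, |ψ m| ≤ C * (1 + |(m : ℝ)|) ^ p)
    (heig : ∀ m : ℤ, ψ (m + 1) + ψ (m - 1) + lam * v (x + (m : ℝ) * α) * ψ m = E * ψ m)
    (m₀ : ℤ) (hm₀ : ψ m₀ ≠ 0) :
    ∀ᶠ n : ℕ in atTop, ∀ m : ℤ, |m - m₀| = n → |ψ m| ≤ 1 / n := by
  obtain ⟨B, τ, hB, -, hd⟩ := exists_intDioph α hdio
  have hψ0 : 0 < |ψ m₀| := abs_pos.2 hm₀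
  filter_upwards [regular_solution_decay lam γm γp v hlam hγm hγp hper hv0 hmono α B τ hB hd x E h
    ψ heig, eventually_rpow_mul_exp_le C p (lyap lam v α E / 32) (min 1 (|ψ m₀| / 2)) hC
    (by positivity) (lt_min one_pos (by positivity)),
    eventually_ge_atTop (m₀.natAbs + 16)] with n hdec hG hn m hm
  have hn1 : (1 : ℝ) ≤ n := by
    have : 1 ≤ n := by omega
    exact_mod_cast this
  have hn0 : (0 : ℝ) < n := by linarith
  set G := Real.exp (-(lyap lam v α E / 32) * n) * (2 * (C * (4 * (n : ℝ)) ^ p)) with hGdef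
  have hG0 : 0 < G := by positivity
  have hG1 : G ≤ 1 / n := by
    rw [le_div_iff₀ hn0, mul_comm]
    exact hG.trans (min_le_left _ _)
  have hG2 : G < |ψ m₀| := by
    have := hG.trans (min_le_right _ _)
    nlinarith
  have hψ : ∀ b : ℤ, m₀ - 2 * n - 1 ≤ b → b ≤ m₀ + 2 * n → |ψ b| ≤ C * (4 * (n : ℝ)) ^ p := by
    intro b h1 h2
    refine (hbd b).trans ?_
    have h3 : 1 + |b| ≤ 4 * n := by
      have : |b| ≤ 4 * n - 1 := by
        rw [abs_le]; omega
      omega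
    have h4 : 1 + |(b : ℝ)| ≤ 4 * n := by exact_mod_cast h3
    gcongr
  set w : ℕ := (n + 7) / 8 with hw
  -- In a regular box `[a, a + n)`, `ψ` is small at every site at distance at least `w` from both
  -- ends.
  have hreg : ∀ c a : ℤ, |c - m₀| ≤ n → a ∈ Finset.Icc (c - (n - 1 - w)) (c - w) →
      ¬ Resonant lam γm v α B τ E n (x + a * α) → |ψ c| ≤ G := by
    intro c a hc ha hres
    rw [Finset.mem_Icc] at ha
    rw [abs_le] at hc
    obtain ⟨k, hk⟩ : ∃ k : ℕ, (k : ℤ) = c - a := ⟨(c - a).toNat, by omega⟩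
    have hk1 : w ≤ k := by omega
    have hk2 : k + 1 + w ≤ n := by omega
    have := hdec a hres k (n - 1 - k) (by omega) (by omega) (by omega)
    rw [show a + (k : ℤ) = c by omega] at this
    refine this.trans ?_
    have b1 := hψ (a - 1) (by omega) (by omega)
    have b2 := hψ (a + n) (by omega) (by omega)
    rw [hGdef]
    gcongr
    linarith
  refine le_trans ?_ hG1
  by_contra hcon
  set A₁ := Finset.Icc (m₀ - (n - 1 - w)) (m₀ - w) with hA₁
  set A₂ := Finset.Icc (m - (n - 1 - w)) (m - w) with hA₂
  have hres : ∀ a ∈ A₁ ∪ A₂, Resonant lam γm v α B τ E n (x + a * α) := by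
    intro a ha
    by_contra hnr
    rcases Finset.mem_union.1 ha with ha | ha
    · exact absurd (hreg m₀ a (by simp) ha hnr) (not_le.2 hG2)
    · exact hcon (hreg m a hm.le ha hnr)
  have hm' : m = m₀ + n ∨ m = m₀ - n := by
    rcases abs_eq (by positivity : (0 : ℤ) ≤ n) |>.1 hm with h | h
    · left; omega
    · right; omega
  have hdisj : Disjoint A₁ A₂ := by
    rw [Finset.disjoint_left]
    intro a h1 h2
    rw [hA₁, Finset.mem_Icc] at h1
    rw [hA₂, Finset.mem_Icc] at h2
    omega
  have hcard := card_resonant_le lam γm γp v hlam hγm hper hmono α B τ hB hd E x n (by omega)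
    (A₁ ∪ A₂) hres (by
      intro a ha a' ha'
      simp only [hA₁, hA₂, Finset.mem_union, Finset.mem_Icc] at ha ha'
      rw [abs_le]
      omega)
  rw [Finset.card_union_of_disjoint hdisj, hA₁, hA₂, Int.card_Icc, Int.card_Icc] at hcard
  omega

/-- polynomially bounded generalized eigenfunctions are in `ℓ²(ℤ)`. -/
theorem generalized_eigenfunction_l2
    (α lam γm γp : ℝ) (v : ℝ → ℝ)
    (hα : Irrational α) (hlam : 0 < lam) (hγm : 0 < γm) (hγp : 0 < γp)
    (hper : ∀ x : ℝ, v (x + 1) = v x) (hv0 : v 0 = 0)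
    (hmono : ∀ x y : ℝ, 0 ≤ x → x ≤ y → y < 1 →
      γm * (y - x) ≤ v y - v x ∧ v y - v x ≤ γp * (y - x))
    (hdio : IsDiophantine α) (x E : ℝ) (hγE : 0 < lyap lam v α E)
    (ψ : ℤ → ℝ) (C p : ℝ) (hC : 0 < C) (hp : 0 < p)
    (hbd : ∀ m : ℤ, |ψ m| ≤ C * (1 + |(m : ℝ)|) ^ p)
    (heig : ∀ m : ℤ, ψ (m + 1) + ψ (m - 1) + lam * v (x + (m : ℝ) * α) * ψ m = E * ψ m) :
    Summable (fun m : ℤ => (ψ m) ^ 2) := by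
  by_cases hzero : ∀ m, ψ m = 0
  · simp [hzero]
  · push Not at hzero
    obtain ⟨m₀, hm₀⟩ := hzero
    have hdec := solution_decay lam γm γp v hlam hγm hγp hper hv0 hmono α hdio x E hγE ψ C p hC hp
      hbd heig m₀ hm₀
    have hsq : ∀ σ : ℤ, |σ| = 1 → Summable (fun n : ℕ => ψ (m₀ + σ * n) ^ 2) := by
      intro σ hσ
      refine Summable.of_norm_bounded_eventually_nat (g := fun n : ℕ => 1 / (n : ℝ) ^ 2)
        (Real.summable_one_div_nat_pow.2 one_lt_two) ?_
      filter_upwards [hdec] with n hn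
      have h1 := hn (m₀ + σ * n) (by rw [add_sub_cancel_left, abs_mul, hσ, one_mul, Nat.abs_cast])
      rw [Real.norm_eq_abs, abs_pow]
      calc |ψ (m₀ + σ * n)| ^ 2 ≤ (1 / (n : ℝ)) ^ 2 := pow_le_pow_left₀ (abs_nonneg _) h1 2
        _ = _ := by rw [div_pow, one_pow]
    have hshift : Summable (fun m : ℤ => ψ (m₀ + m) ^ 2) := by
      refine Summable.of_nat_of_neg ?_ ?_
      · simpa using hsq 1 (by simp)
      · simpa using hsq (-1) (by simp)
    exact (Equiv.summable_iff (Equiv.addLeft m₀)).1 hshift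

end
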